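/- arXiv:0905.1045 — 2 statements merged into one kernel-verified Lean document; each statement's English description precedes it below -/
import Mathlib

section
/- Let m ≥ 2 and let a_1, …, a_m be pairwise distinct symbols. Every context-free language L ⊆ a_1^* a_2^* ⋯ a_m^* with ε ∉ L is generated by some context-free grammar G such that every sentential form derivable from the start symbol of G contains at most m − 1 occurrences of nonterminals (i.e., L is ultralinear of rank at most m − 1). -/
/-- The letter-bounded language `a_1^* a_2^* ⋯ a_m^*`. -/
def letterBounded {T : Type} {m : ℕ} (a : Fin m → T) : Language T :=
  { z | ∃ k : Fin m → ℕ, z = (List.ofFn fun i : Fin m => List.replicate (k i) (a i)).flatten }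

/-- Whether a symbol is a nonterminal. -/
def Symbol.isNT {T N : Type} : Symbol T N → Bool
  | Symbol.nonterminal _ => true
  | Symbol.terminal _ => false

/-!
Let `R` be the rules of a grammar for `L`, and let a sentential form `α` derive a word `w` of
`a_i^* ⋯ a_j^*` with `i < j`. Splitting off the first symbol of `α` writes `w = u v` with
`u ∈ a_i^* ⋯ a_k^*` and `v ∈ a_k^* ⋯ a_j^*` for some `k`. If `i < k < j`, this is a branching into
two smaller problems of the same kind, and the number of letter boundaries is additive:
`j - i = (k - i) + (j - k)`. If `k = i`, then `u` is a power of `a_i`. The exponents of `a_i` that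
a form derives make up a finite union of arithmetic progressions `f + ℕ d`, so `u` can be replaced
by a prefix `a_i ^ f` and a loop adding `a_i ^ d`, which do not branch; the case `k = j` is
symmetric. Weighting a nonterminal by `j - i ≥ 1`, no rule increases the total weight, which is
`m - 1` at the start and always bounds the number of nonterminals.

For the progressions, call a nonterminal pumpable if the exponents derivable from it are invariant
under adding some positive number. A derivation without pumpable nonterminals yields only finitely
many exponents, and any other exponent may be increased by a common multiple of the periods.
-/

namespace Ultralinear

open scoped Computability Pointwise

section Yields

/-- Big-step derivation: `Yields R α w` says that the rules `R` derive the terminal word `w` from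
the sentential form `α`. Unlike `ContextFreeGrammar.Derives` it is inductive on the derivation
forest. -/
inductive Yields {T N : Type*} (R : Finset (ContextFreeRule T N)) :
    List (Symbol T N) → List T → Prop
  | nil : Yields R [] []
  | terminal {α w} (t : T) : Yields R α w → Yields R (.terminal t :: α) (t :: w)
  | nonterminal {α u v} {r : ContextFreeRule T N} : r ∈ R → Yields R r.output u → Yields R α v →
      Yields R (.nonterminal r.input :: α) (u ++ v)

/-- The language of all terminal words derivable from the sentential form `α`. -/
def formLanguage {T N : Type*} (R : Finset (ContextFreeRule T N)) (α : List (Symbol T N)) :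
    Language T :=
  {w | Yields R α w}

variable {T N : Type*} {R R' : Finset (ContextFreeRule T N)} {α β : List (Symbol T N)}
  {w : List T}

lemma Yields.mono (hR : R' ⊆ R) (h : Yields R' α w) : Yields R α w := by
  induction h with
  | nil => exact .nil
  | terminal t _ ih => exact .terminal t ih
  | nonterminal hr _ _ ihu ihv => exact .nonterminal (hR hr) ihu ihv

lemma yields_map_terminal (R : Finset (ContextFreeRule T N)) (w : List T) :
    Yields R (w.map .terminal) w := by
  induction w with
  | nil => exact .nil
  | cons t w ih => exact .terminal t ih

lemma yields_singleton_nonterminal {A : N} :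
    Yields R [.nonterminal A] w ↔ ∃ r ∈ R, r.input = A ∧ Yields R r.output w := by
  constructor
  · rintro (_ | _ | ⟨hr, hu, _ | _⟩)
    exact ⟨_, hr, rfl, by simpa using hu⟩
  · rintro ⟨r, hr, rfl, h⟩
    simpa using Yields.nonterminal hr h .nil

lemma Yields.append {u v : List T} (hu : Yields R α u) (hv : Yields R β v) :
    Yields R (α ++ β) (u ++ v) := by
  induction hu with
  | nil => exact hv
  | terminal t _ ih => exact .terminal t ih
  | nonterminal hr hu _ _ ih => simpa using Yields.nonterminal hr hu ih

lemma formLanguage_nil (R : Finset (ContextFreeRule T N)) : formLanguage R [] = 1 := by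
  refine Language.ext fun w ↦ ⟨?_, ?_⟩
  · rintro ⟨⟩
    rfl
  · rintro rfl
    exact .nil

lemma formLanguage_singleton_terminal (R : Finset (ContextFreeRule T N)) (t : T) :
    formLanguage R [.terminal t] = {[t]} := by
  refine Language.ext fun w ↦ ⟨?_, ?_⟩
  · rintro (_ | ⟨_, ⟨⟩⟩)
    rfl
  · rintro rfl
    exact .terminal t .nil

lemma formLanguage_append (R : Finset (ContextFreeRule T N)) (α β : List (Symbol T N)) :
    formLanguage R (α ++ β) = formLanguage R α * formLanguage R β := by
  refine le_antisymm (fun w hw ↦ ?_) ?_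
  · induction α generalizing w with
    | nil => exact ⟨[], .nil, w, hw, rfl⟩
    | cons x α ih =>
      rcases hw with _ | ⟨t, hw⟩ | ⟨hr, hu, hv⟩
      · obtain ⟨u, hu, v, hv, rfl⟩ := ih _ hw
        exact ⟨t :: u, .terminal t hu, v, hv, rfl⟩
      · obtain ⟨u', hu', v', hv', rfl⟩ := ih _ hv
        exact ⟨_ ++ u', .nonterminal hr hu hu', v', hv', List.append_assoc _ _ _⟩
  · rintro _ ⟨u, hu, v, hv, rfl⟩
    exact hu.append hv

lemma formLanguage_cons (R : Finset (ContextFreeRule T N)) (x : Symbol T N)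
    (α : List (Symbol T N)) :
    formLanguage R (x :: α) = formLanguage R [x] * formLanguage R α :=
  formLanguage_append R [x] α

lemma Yields.of_rewrites {r : ContextFreeRule T N} (hr : r ∈ R) (h : r.Rewrites α β)
    (hw : Yields R β w) : Yields R α w := by
  induction h generalizing w with
  | head s =>
    obtain ⟨u, hu, v, hv, rfl⟩ := (formLanguage_append R r.output s).le hw
    exact .nonterminal hr hu hv
  | cons x _ ih =>
    rcases hw with _ | ⟨t, hw⟩ | ⟨hr', hu, hv⟩
    · exact .terminal t (ih hw)
    · exact .nonterminal hr' hu (ih hv)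

lemma yields_iff_derives (g : ContextFreeGrammar T) {α : List (Symbol T g.NT)} {w : List T} :
    Yields g.rules α w ↔ g.Derives α (w.map .terminal) := by
  constructor <;> intro h
  · induction h with
    | nil => rfl
    | terminal t _ ih => exact ih.append_left [.terminal t]
    | @nonterminal α u v r hr _ _ ihu ihv =>
      have first : g.Derives (.nonterminal r.input :: α) (r.output ++ α) :=
        ContextFreeGrammar.Produces.single ⟨r, hr, .head α⟩
      rw [List.map_append]
      exact first.trans ((ihu.append_right α).trans (ihv.append_left _))
  · induction h using Relation.ReflTransGen.head_induction_on with
    | refl => exact yields_map_terminal g.rules w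
    | head hstep _ ih =>
      obtain ⟨r, hr, hrw⟩ := hstep
      exact .of_rewrites hr hrw ih

lemma language_eq_formLanguage (g : ContextFreeGrammar T) :
    g.language = formLanguage g.rules [.nonterminal g.initial] :=
  Language.ext fun _ ↦ (yields_iff_derives g).symm

open scoped Classical in
/-- The word `y` is read off an innermost occurrence of a nonterminal satisfying `p`, so that no
such nonterminal occurs in its derivation; `x` and `z` surround it in `w`. -/
lemma Yields.exists_innermost (hR : R' ⊆ R) (p : N → Prop) (h : Yields R' α w) :
    Yields (R'.filter fun r ↦ ¬ p r.input) α w ∨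
    ∃ r ∈ R', p r.input ∧ ∃ x y z, w = x ++ y ++ z ∧
      Yields (R'.filter fun r ↦ ¬ p r.input) r.output y ∧
      ∀ y', Yields R [.nonterminal r.input] y' → Yields R α (x ++ y' ++ z) := by
  induction h with
  | nil => exact .inl .nil
  | terminal t _ ih =>
    rcases ih with ih | ⟨r, hr, hp, x, y, z, rfl, hy, hctx⟩
    · exact .inl (.terminal t ih)
    · exact .inr ⟨r, hr, hp, t :: x, y, z, rfl, hy, fun y' hy' ↦ .terminal t (hctx y' hy')⟩
  | @nonterminal α u v r hr hu hv ihu ihv =>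
    rcases ihu with ihu | ⟨s, hs, hp, x, y, z, rfl, hy, hctx⟩
    · rcases ihv with ihv | ⟨s, hs, hp, x, y, z, rfl, hy, hctx⟩
      · by_cases hp : p r.input
        · refine .inr ⟨r, hr, hp, [], u, v, rfl, ihu, fun y' hy' ↦ ?_⟩
          exact (formLanguage_cons R _ α).ge ⟨y', hy', v, hv.mono hR, rfl⟩
        · exact .inl (.nonterminal (Finset.mem_filter.2 ⟨hr, hp⟩) ihu ihv)
      · refine .inr ⟨s, hs, hp, u ++ x, y, z, by simp, hy, fun y' hy' ↦ ?_⟩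
        simpa using Yields.nonterminal (hR hr) (hu.mono hR) (hctx y' hy')
    · refine .inr ⟨s, hs, hp, x, y, z ++ v, by simp, hy, fun y' hy' ↦ ?_⟩
      simpa using Yields.nonterminal (hR hr) (hctx y' hy') (hv.mono hR)

end Yields

section Unary

variable {T N : Type*} {R R' : Finset (ContextFreeRule T N)} {t : T} {α : List (Symbol T N)}

/-- The set of all `n` such that `t ^ n` is derivable from `α`. -/
def exponents (R : Finset (ContextFreeRule T N)) (t : T) (α : List (Symbol T N)) : Set ℕ :=
  {n | Yields R α (List.replicate n t)}

lemma exponents_append_subset (R : Finset (ContextFreeRule T N)) (t : T)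
    (α β : List (Symbol T N)) :
    exponents R t (α ++ β) ⊆ exponents R t α + exponents R t β := by
  intro n hn
  obtain ⟨u, hu, v, hv, huv⟩ := (formLanguage_append R α β).le hn
  obtain ⟨hlen, hu', hv'⟩ := List.append_eq_replicate_iff.1 huv
  rw [hu'] at hu
  rw [hv'] at hv
  exact ⟨u.length, hu, v.length, hv, hlen⟩

open scoped Classical in
lemma exists_innermost_of_mem_exponents (hR : R' ⊆ R) (p : N → Prop) {n : ℕ}
    (hn : n ∈ exponents R' t α) :
    n ∈ exponents (R'.filter fun r ↦ ¬ p r.input) t α ∨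
    ∃ r ∈ R', p r.input ∧ ∃ c k, n = c + k ∧
      k ∈ exponents (R'.filter fun r ↦ ¬ p r.input) t r.output ∧
      ∀ k' ∈ exponents R t [.nonterminal r.input], c + k' ∈ exponents R t α := by
  refine (Yields.exists_innermost hR p hn).imp_right ?_
  rintro ⟨r, hr, hp, x, y, z, hxyz, hy, hctx⟩
  obtain ⟨hlen, hxy, hz⟩ := List.append_eq_replicate_iff.1 hxyz.symm
  obtain ⟨-, hx, hy'⟩ := List.append_eq_replicate_iff.1 hxy
  rw [hy'] at hy
  refine ⟨r, hr, hp, x.length + z.length, y.length, ?_, hy, fun k' hk' ↦ ?_⟩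
  · rw [← hlen, List.length_append]
    omega
  · have hword := hctx _ hk'
    rw [hx, hz, List.replicate_append_replicate, List.replicate_append_replicate,
      add_right_comm] at hword
    exact hword

/-- The exponents of `t` derivable from the nonterminal `A` are closed under adding `d`. -/
def Pumps (R : Finset (ContextFreeRule T N)) (t : T) (A : N) (d : ℕ) : Prop :=
  ∀ n ∈ exponents R t [.nonterminal A], n + d ∈ exponents R t [.nonterminal A]

lemma Pumps.mul_right {A : N} {d : ℕ} (h : Pumps R t A d) (c : ℕ) : Pumps R t A (d * c) := by
  induction c with
  | zero => exact fun n hn ↦ hn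
  | succ c ih => exact fun n hn ↦ add_assoc n (d * c) d ▸ h _ (ih n hn)

lemma finite_exponents_of_nonterminals
    (h : ∀ A, (exponents R t [.nonterminal A]).Finite) (α : List (Symbol T N)) :
    (exponents R t α).Finite := by
  induction α with
  | nil =>
    refine (Set.finite_singleton 0).subset fun n hn ↦ ?_
    exact List.replicate_eq_nil_iff t |>.1 ((formLanguage_nil R).le hn)
  | cons x α ih =>
    refine (Set.Finite.add ?_ ih).subset (exponents_append_subset R t [x] α)
    cases x with
    | nonterminal A => exact h A
    | terminal s =>
      refine (Set.finite_singleton 1).subset fun n hn ↦ ?_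
      have hword : List.replicate n t = [s] := (formLanguage_singleton_terminal R s).le hn
      simpa using congrArg List.length hword

/-- An innermost occurrence of `A` adds nothing to the exponent outside of it when `A` cannot be
pumped, so `A` can be removed from the grammar. -/
lemma finite_exponents_of_pumps_eq_zero (hR : R' ⊆ R)
    (hpump : ∀ r ∈ R', ∀ d, Pumps R t r.input d → d = 0) (α : List (Symbol T N)) :
    (exponents R' t α).Finite := by
  classical
  induction R' using Finset.strongInduction generalizing α with
  | H R' ih =>
    refine finite_exponents_of_nonterminals (fun A ↦ ?_) α
    have hfin : (⋃ r ∈ R'.filter (·.input = A),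
        exponents (R'.filter fun r ↦ ¬ r.input = A) t r.output).Finite := by
      refine Set.Finite.biUnion (Finset.finite_toSet _) fun r hr ↦ ?_
      obtain ⟨hr, hA⟩ := Finset.mem_filter.1 hr
      exact ih _ (Finset.filter_ssubset.2 ⟨r, hr, not_not_intro hA⟩)
        ((Finset.filter_subset _ _).trans hR)
        (fun s hs ↦ hpump s (Finset.mem_of_mem_filter s hs)) _
    refine hfin.subset fun n hn ↦ ?_
    rcases exists_innermost_of_mem_exponents hR (· = A) hn with
      havoid | ⟨r, hr, rfl, c, k, rfl, hk, hctx⟩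
    · obtain ⟨r, hr, hA, -⟩ := yields_singleton_nonterminal.1 havoid
      exact absurd hA (Finset.mem_filter.1 hr).2
    · obtain rfl : c = 0 := hpump r hr c fun k' hk' ↦ add_comm c k' ▸ hctx k' hk'
      rw [zero_add]
      exact Set.mem_biUnion (Finset.mem_filter.2 ⟨hr, rfl⟩) hk

lemma exists_period (R : Finset (ContextFreeRule T N)) (t : T) (α : List (Symbol T N)) :
    ∃ D > 0, ∃ E : Set ℕ, E.Finite ∧
      ∀ n ∈ exponents R t α, n ∈ E ∨ n + D ∈ exponents R t α := by
  classical
  let Pumpable (A : N) : Prop := ∃ d > 0, Pumps R t A d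
  have hstep : ∀ A, ∃ d > 0, Pumpable A → Pumps R t A d := by
    intro A
    by_cases hA : Pumpable A
    · obtain ⟨d, hd, hpump⟩ := hA
      exact ⟨d, hd, fun _ ↦ hpump⟩
    · exact ⟨1, one_pos, fun h ↦ absurd h hA⟩
  choose step hpos hpump using hstep
  refine ⟨∏ r ∈ R, step r.input, Finset.prod_pos fun r _ ↦ hpos _,
    exponents (R.filter fun r ↦ ¬ Pumpable r.input) t α, ?_, fun n hn ↦ ?_⟩
  · refine finite_exponents_of_pumps_eq_zero (Finset.filter_subset _ _) (fun r hr d hd ↦ ?_) α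
    by_contra hne
    exact (Finset.mem_filter.1 hr).2 ⟨d, Nat.pos_of_ne_zero hne, hd⟩
  · refine (exists_innermost_of_mem_exponents subset_rfl Pumpable hn).imp_right ?_
    rintro ⟨r, hr, hA, c, k, rfl, hk, hctx⟩
    have hkA : k ∈ exponents R t [.nonterminal r.input] := yields_singleton_nonterminal.2
      ⟨r, hr, rfl, Yields.mono (Finset.filter_subset _ _) hk⟩
    obtain ⟨c', hc'⟩ := Finset.dvd_prod_of_mem (fun r ↦ step r.input) hr
    rw [hc', add_assoc]
    exact hctx _ ((hpump _ hA).mul_right c' k hkA)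

/-- `S` is a union of arithmetic progressions (possibly of step `0`) with start and step at most
`B`; in particular it is a finite union of progressions. -/
def IsProgressionUnion (B : ℕ) (S : Set ℕ) : Prop :=
  ∀ n ∈ S, ∃ f ≤ B, ∃ d ≤ B, (∃ k, n = f + k * d) ∧ ∀ k, f + k * d ∈ S

lemma IsProgressionUnion.mono {B B' : ℕ} {S : Set ℕ} (hB : B ≤ B') (h : IsProgressionUnion B S) :
    IsProgressionUnion B' S := by
  intro n hn
  obtain ⟨f, hf, d, hd, hS⟩ := h n hn
  exact ⟨f, hf.trans hB, d, hd.trans hB, hS⟩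

lemma exists_isProgressionUnion_of_period {S E : Set ℕ} {D : ℕ} (hD : 0 < D) (hE : E.Finite)
    (h : ∀ n ∈ S, n ∈ E ∨ n + D ∈ S) : ∃ B, IsProgressionUnion B S := by
  obtain ⟨p, hp⟩ := hE.bddAbove
  let large (r : ℕ) : Set ℕ := {n ∈ S | p < n ∧ n % D = r}
  refine ⟨p + D + (Finset.range D).sup fun r ↦ sInf (large r), fun n hn ↦ ?_⟩
  rcases le_or_gt n p with hnp | hnp
  · exact ⟨n, by omega, 0, by omega, ⟨0, by simp⟩, by simpa using hn⟩
  have hmem : n ∈ large (n % D) := ⟨hn, hnp, rfl⟩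
  have hbound : sInf (large (n % D)) ≤ (Finset.range D).sup fun r ↦ sInf (large r) :=
    Finset.le_sup (f := fun r ↦ sInf (large r)) (Finset.mem_range.2 (Nat.mod_lt n hD))
  have hle : sInf (large (n % D)) ≤ n := Nat.sInf_le hmem
  obtain ⟨hfS, hpf, hmod⟩ := Nat.sInf_mem ⟨n, hmem⟩
  set f := sInf (large (n % D))
  obtain ⟨k, hk⟩ : D ∣ n - f := (Nat.modEq_iff_dvd' hle).1 hmod
  refine ⟨f, by omega, D, by omega, ⟨k, by rw [mul_comm, ← hk]; omega⟩, fun k' ↦ ?_⟩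
  induction k' with
  | zero => simpa using hfS
  | succ k' ih =>
    rw [Nat.succ_mul, ← add_assoc]
    refine (h _ ih).resolve_left fun hmemE ↦ ?_
    have := hp hmemE
    omega

lemma exists_isProgressionUnion_exponents (R : Finset (ContextFreeRule T N)) (t : T)
    (α : List (Symbol T N)) : ∃ B, IsProgressionUnion B (exponents R t α) := by
  obtain ⟨D, hD, E, hE, h⟩ := exists_period R t α
  exact exists_isProgressionUnion_of_period hD hE h

lemma exists_uniform_isProgressionUnion {ι : Type*} [Finite ι] (S : ι → Set ℕ)
    (h : ∀ i, ∃ B, IsProgressionUnion B (S i)) : ∃ B, ∀ i, IsProgressionUnion B (S i) := by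
  choose b hb using h
  obtain ⟨B, hB⟩ := (Set.finite_range b).bddAbove
  exact ⟨B, fun i ↦ (hb i).mono (hB ⟨i, rfl⟩)⟩

end Unary

section SoundRules

variable {T N : Type*} {I : N → Language T} {ω : N → ℕ}

/-- The language of a symbol when nonterminals are interpreted by the languages `I`. -/
def symbolLanguage (I : N → Language T) : Symbol T N → Language T
  | .terminal t => {[t]}
  | .nonterminal A => I A

/-- The value of a sentential form when nonterminals are interpreted by the languages `I`. -/
def evalForm (I : N → Language T) (α : List (Symbol T N)) : Language T :=
  (α.map (symbolLanguage I)).prod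

lemma evalForm_append (α β : List (Symbol T N)) :
    evalForm I (α ++ β) = evalForm I α * evalForm I β := by
  simp [evalForm]

lemma evalForm_cons (x : Symbol T N) (α : List (Symbol T N)) :
    evalForm I (x :: α) = symbolLanguage I x * evalForm I α := by
  simp [evalForm]

lemma evalForm_singleton_nonterminal (A : N) :
    evalForm I ([.nonterminal A] : List (Symbol T N)) = I A := by
  simp [evalForm, symbolLanguage]

lemma singleton_mul_singleton (u v : List T) : ({u} : Language T) * {v} = {u ++ v} :=
  Set.image2_singleton

lemma evalForm_map_terminal (w : List T) : evalForm I (w.map .terminal) = {w} := by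
  induction w with
  | nil => rfl
  | cons t w ih =>
    rw [List.map_cons, evalForm_cons, ih]
    exact singleton_mul_singleton [t] w

lemma formLanguage_le_evalForm {R : Finset (ContextFreeRule T N)}
    (hI : ∀ r ∈ R, evalForm I r.output ≤ I r.input) (α : List (Symbol T N)) :
    formLanguage R α ≤ evalForm I α := by
  intro w hw
  induction hw with
  | nil => rfl
  | terminal t _ ih => exact evalForm_cons _ _ ▸ Language.append_mem_mul (a := [t]) rfl ih
  | nonterminal hr _ _ ihu ihv =>
    exact evalForm_cons _ _ ▸ Language.append_mem_mul (hI _ hr ihu) ihv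

lemma evalForm_le_formLanguage (R : Finset (ContextFreeRule T N)) (α : List (Symbol T N)) :
    evalForm (fun A ↦ formLanguage R [.nonterminal A]) α ≤ formLanguage R α := by
  induction α with
  | nil => exact (formLanguage_nil R).ge
  | cons x α ih =>
    rw [evalForm_cons, formLanguage_cons]
    refine mul_le_mul' ?_ ih
    cases x with
    | terminal t => exact (formLanguage_singleton_terminal R t).ge
    | nonterminal A => exact le_rfl

/-- The total weight of the nonterminals of a sentential form. -/
def formWeight (ω : N → ℕ) (α : List (Symbol T N)) : ℕ :=
  (α.map fun | .terminal _ => 0 | .nonterminal A => ω A).sum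

lemma formWeight_append (α β : List (Symbol T N)) :
    formWeight ω (α ++ β) = formWeight ω α + formWeight ω β := by
  simp [formWeight]

lemma formWeight_singleton_nonterminal (A : N) :
    formWeight ω ([.nonterminal A] : List (Symbol T N)) = ω A := by
  simp [formWeight]

lemma formWeight_map_terminal (w : List T) : formWeight ω (w.map .terminal) = 0 := by
  induction w with
  | nil => rfl
  | cons t w ih => simpa [formWeight] using ih

/-- Truth of a rule when nonterminals are interpreted by the languages `I`, together with
monotonicity of the weight `ω` in a derivation step. -/
structure IsSound (I : N → Language T) (ω : N → ℕ) (r : ContextFreeRule T N) : Prop where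
  evalForm_output_le : evalForm I r.output ≤ I r.input
  formWeight_output_le : formWeight ω r.output ≤ ω r.input

lemma finite_rules_of_length_le [Finite N] (τ : Set T) [Finite τ] (B : ℕ) :
    {r : ContextFreeRule T N | r.output.length ≤ B ∧
      ∀ t, .terminal t ∈ r.output → t ∈ τ}.Finite := by
  let toSymbol : τ ⊕ N → Symbol T N := Sum.elim (fun t ↦ .terminal t) .nonterminal
  refine ((Set.finite_univ.prod (List.finite_length_le (τ ⊕ N) B)).image
    fun x : N × List (τ ⊕ N) ↦ ⟨x.1, x.2.map toSymbol⟩).subset ?_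
  rintro ⟨A, α⟩ ⟨hlen, hτ⟩
  have hrange : ∀ x ∈ α, x ∈ Set.range toSymbol := by
    rintro (t | A) hx
    · exact ⟨.inl ⟨t, hτ t hx⟩, rfl⟩
    · exact ⟨.inr A, rfl⟩
  obtain ⟨l, rfl⟩ := (Set.range_list_map toSymbol).ge hrange
  exact ⟨(A, l), ⟨trivial, (List.length_map toSymbol).ge.trans hlen⟩, rfl⟩

variable [Finite N] {τ : Set T} [Finite τ] {B : ℕ}

open scoped Classical in
/-- All sound rules with at most `B` symbols on the right and with terminals in `τ`. Taking all of
them makes the languages they generate automatically correct; only completeness depends on the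
choice of `I`. -/
noncomputable def soundRules (τ : Set T) [Finite τ] (B : ℕ) (I : N → Language T) (ω : N → ℕ) :
    Finset (ContextFreeRule T N) :=
  (finite_rules_of_length_le τ B).toFinset.filter (IsSound I ω)

lemma mem_soundRules {r : ContextFreeRule T N} :
    r ∈ soundRules τ B I ω ↔
      (r.output.length ≤ B ∧ ∀ t, .terminal t ∈ r.output → t ∈ τ) ∧ IsSound I ω r := by
  simp [soundRules]

/-- The language that the sound rules generate from the nonterminal `x`. -/
def generated (τ : Set T) [Finite τ] (B : ℕ) (I : N → Language T) (ω : N → ℕ) (x : N) :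
    Language T :=
  formLanguage (soundRules τ B I ω) [.nonterminal x]

lemma generated_le (x : N) : generated τ B I ω x ≤ I x :=
  (formLanguage_le_evalForm (fun _ hr ↦ (mem_soundRules.1 hr).2.evalForm_output_le) _).trans_eq
    (evalForm_singleton_nonterminal x)

lemma evalForm_generated_le {x : N} {α : List (Symbol T N)} (hlen : α.length ≤ B)
    (hτ : ∀ t, .terminal t ∈ α → t ∈ τ) (hI : evalForm I α ≤ I x) (hω : formWeight ω α ≤ ω x) :
    evalForm (generated τ B I ω) α ≤ generated τ B I ω x := by
  have hmem : (⟨x, α⟩ : ContextFreeRule T N) ∈ soundRules τ B I ω :=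
    mem_soundRules.2 ⟨⟨hlen, hτ⟩, hI, hω⟩
  exact (evalForm_le_formLanguage _ α).trans fun w hw ↦
    yields_singleton_nonterminal.2 ⟨_, hmem, rfl, hw⟩

lemma mem_generated_of_mem {x : N} {w : List T} (hlen : w.length ≤ B) (hτ : ∀ t ∈ w, t ∈ τ)
    (hw : w ∈ I x) : w ∈ generated τ B I ω x := by
  refine evalForm_generated_le (α := w.map .terminal) (by simpa) (by simpa) ?_ ?_
    ((evalForm_map_terminal w).ge rfl)
  · rw [evalForm_map_terminal]
    exact Set.singleton_subset_iff.2 hw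
  · simp [formWeight_map_terminal]

lemma singleton_mul_generated_le {x y : N} {p : List T} (hlen : p.length < B)
    (hτ : ∀ t ∈ p, t ∈ τ) (hI : {p} * I y ≤ I x) (hω : ω y ≤ ω x) :
    {p} * generated τ B I ω y ≤ generated τ B I ω x := by
  have heval (J : N → Language T) :
      evalForm J (p.map .terminal ++ [.nonterminal y]) = {p} * J y := by
    rw [evalForm_append, evalForm_map_terminal, evalForm_singleton_nonterminal]
  rw [← heval]
  refine evalForm_generated_le (by simpa) (by simpa) ((heval I).trans_le hI) ?_
  rwa [formWeight_append, formWeight_map_terminal, formWeight_singleton_nonterminal, zero_add]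

lemma generated_mul_singleton_le {x y : N} {q : List T} (hlen : q.length < B)
    (hτ : ∀ t ∈ q, t ∈ τ) (hI : I y * {q} ≤ I x) (hω : ω y ≤ ω x) :
    generated τ B I ω y * {q} ≤ generated τ B I ω x := by
  have heval (J : N → Language T) :
      evalForm J ([.nonterminal y] ++ q.map .terminal) = J y * {q} := by
    rw [evalForm_append, evalForm_map_terminal, evalForm_singleton_nonterminal]
  rw [← heval]
  refine evalForm_generated_le (by simpa) (by simpa) ((heval I).trans_le hI) ?_
  rwa [formWeight_append, formWeight_map_terminal, formWeight_singleton_nonterminal, add_zero]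

lemma generated_le_generated {x y : N} (hB : 0 < B) (hI : I y ≤ I x) (hω : ω y ≤ ω x) :
    generated τ B I ω y ≤ generated τ B I ω x := by
  have h := singleton_mul_generated_le (τ := τ) (p := []) hB (by simp)
    ((one_mul (I y)).trans_le hI) hω
  exact (one_mul (generated τ B I ω y)).ge.trans h

lemma generated_mul_generated_le {x y z : N} (hB : 2 ≤ B) (hI : I y * I z ≤ I x)
    (hω : ω y + ω z ≤ ω x) :
    generated τ B I ω y * generated τ B I ω z ≤ generated τ B I ω x := by
  have heval (J : N → Language T) :
      evalForm J ([.nonterminal y, .nonterminal z] : List (Symbol T N)) = J y * J z := by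
    rw [evalForm_cons, evalForm_singleton_nonterminal]
    rfl
  rw [← heval]
  exact evalForm_generated_le hB (by simp) ((heval I).trans_le hI) (by simpa [formWeight])

end SoundRules

section NonterminalBound

lemma countP_isNT_le_formWeight {T N : Type} {ω : N → ℕ} (hω : ∀ A, 0 < ω A)
    (α : List (Symbol T N)) : α.countP Symbol.isNT ≤ formWeight ω α := by
  induction α with
  | nil => simp
  | cons x α ih =>
    cases x with
    | terminal t => simpa [formWeight, Symbol.isNT] using ih
    | nonterminal A =>
      have hA : 1 ≤ ω A := hω A
      simpa [formWeight, Symbol.isNT, List.countP_cons, add_comm] using add_le_add hA ih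

lemma formWeight_le_of_derives {T : Type*} (g : ContextFreeGrammar T) {ω : g.NT → ℕ}
    (hω : ∀ r ∈ g.rules, formWeight ω r.output ≤ ω r.input) {α β : List (Symbol T g.NT)}
    (h : g.Derives α β) : formWeight ω β ≤ formWeight ω α := by
  induction h with
  | refl => rfl
  | tail _ hstep ih =>
    refine le_trans ?_ ih
    obtain ⟨r, hr, hrw⟩ := hstep
    obtain ⟨p, q, rfl, rfl⟩ := hrw.exists_parts
    have := hω r hr
    simp only [formWeight_append, formWeight_singleton_nonterminal]
    omega

lemma countP_isNT_le_of_derives {T : Type} (g : ContextFreeGrammar T) {ω : g.NT → ℕ}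
    (hpos : ∀ A, 0 < ω A) (hω : ∀ r ∈ g.rules, formWeight ω r.output ≤ ω r.input) {A : g.NT}
    {α : List (Symbol T g.NT)} (h : g.Derives [.nonterminal A] α) :
    α.countP Symbol.isNT ≤ ω A :=
  (countP_isNT_le_formWeight hpos α).trans <|
    (formWeight_le_of_derives g hω h).trans_eq (formWeight_singleton_nonterminal A)

end NonterminalBound

section ReplicateLanguages

variable {T : Type*} {t : T}

lemma mem_kstar_replicate {d : ℕ} {w : List T} :
    w ∈ ({List.replicate d t} : Language T)∗ ↔ ∃ k, w = List.replicate (k * d) t := by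
  constructor
  · rintro ⟨l, rfl, hl⟩
    exact ⟨l.length, by
      rw [List.eq_replicate_of_mem hl, List.flatten_replicate_replicate, List.length_replicate]⟩
  · rintro ⟨k, rfl⟩
    refine ⟨List.replicate k (List.replicate d t), ?_, fun y hy ↦ List.eq_of_mem_replicate hy⟩
    rw [List.flatten_replicate_replicate]

lemma mem_replicate_mul_kstar {f d : ℕ} {w : List T} :
    w ∈ ({List.replicate f t} : Language T) * {List.replicate d t}∗ ↔
      ∃ k, w = List.replicate (f + k * d) t := by
  constructor
  · rintro ⟨_, rfl, v, hv, rfl⟩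
    obtain ⟨k, rfl⟩ := mem_kstar_replicate.1 hv
    exact ⟨k, List.replicate_append_replicate⟩
  · rintro ⟨k, rfl⟩
    rw [← List.replicate_append_replicate]
    exact Language.append_mem_mul rfl (mem_kstar_replicate.2 ⟨k, rfl⟩)

lemma replicate_mul_kstar_comm (t : T) (f d : ℕ) :
    ({List.replicate f t} : Language T) * {List.replicate d t}∗ =
      {List.replicate d t}∗ * {List.replicate f t} := by
  have hcomm : Commute ({List.replicate f t} : Language T) {List.replicate d t} := by
    simp only [Commute, SemiconjBy, singleton_mul_singleton, List.replicate_append_replicate,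
      add_comm]
  rw [Language.kstar_eq_iSup_pow, Language.mul_iSup, Language.iSup_mul]
  exact iSup_congr fun k ↦ hcomm.pow_right k

lemma kstar_singleton_nil : ({[]} : Language T)∗ = 1 := kstar_one

lemma mem_range_of_mem_replicate {ι : Type*} (a : ι → T) (i : ι) (n : ℕ) :
    ∀ t ∈ List.replicate n (a i), t ∈ Set.range a :=
  fun _ ht ↦ ⟨i, (List.eq_of_mem_replicate ht).symm⟩

end ReplicateLanguages

section Blocks

variable {T ι : Type*} [Preorder ι] {a : ι → T} {i j k : ι}

/-- The language `a_i^* ⋯ a_j^*`, as the images under `a` of the sorted lists of indices between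
`i` and `j`. -/
def block (a : ι → T) (i j : ι) : Language T :=
  {w | ∃ l : List ι, l.Pairwise (· ≤ ·) ∧ (∀ x ∈ l, i ≤ x ∧ x ≤ j) ∧ w = l.map a}

lemma nil_mem_block (a : ι → T) (i j : ι) : [] ∈ block a i j :=
  ⟨[], .nil, by simp, rfl⟩

lemma block_mul_block_le (hik : i ≤ k) (hkj : k ≤ j) :
    block a i k * block a k j ≤ block a i j := by
  rintro _ ⟨_, ⟨l, hl, hlk, rfl⟩, _, ⟨l', hl', hkl', rfl⟩, rfl⟩
  refine ⟨l ++ l', ?_, fun x hx ↦ ?_, List.map_append.symm⟩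
  · exact List.pairwise_append.2
      ⟨hl, hl', fun x hx y hy ↦ (hlk x hx).2.trans (hkl' y hy).1⟩
  · rcases List.mem_append.1 hx with hx | hx
    · exact ⟨(hlk x hx).1, (hlk x hx).2.trans hkj⟩
    · exact ⟨hik.trans (hkl' x hx).1, (hkl' x hx).2⟩

lemma exists_mem_block_of_append_mem_block (hij : i ≤ j) {u v : List T}
    (h : u ++ v ∈ block a i j) :
    ∃ k, i ≤ k ∧ k ≤ j ∧ u ∈ block a i k ∧ v ∈ block a k j := by
  obtain ⟨l, hl, hmem, huv⟩ := h
  obtain ⟨l₁, l₂, rfl, rfl, rfl⟩ := List.append_eq_map_iff.1 huv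
  obtain ⟨hl₁, hl₂, hle⟩ := List.pairwise_append.1 hl
  simp only [List.mem_append, or_imp, forall_and] at hmem
  obtain ⟨⟨hi₁, hi₂⟩, hj₁, hj₂⟩ := hmem
  cases l₂ with
  | nil => exact ⟨j, hij, le_rfl, ⟨l₁, hl₁, fun x hx ↦ ⟨hi₁ x hx, hj₁ x hx⟩, rfl⟩,
      nil_mem_block a j j⟩
  | cons k l₂ =>
    have hk : k ∈ k :: l₂ := List.mem_cons_self
    refine ⟨k, hi₂ k hk, hj₂ k hk, ⟨l₁, hl₁, fun x hx ↦ ⟨hi₁ x hx, hle x hx k hk⟩, rfl⟩,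
      ⟨k :: l₂, hl₂, fun x hx ↦ ⟨?_, hj₂ x hx⟩, rfl⟩⟩
    rcases List.mem_cons.1 hx with rfl | hx
    · exact le_rfl
    · exact (List.pairwise_cons.1 hl₂).1 x hx

lemma mem_range_of_mem_block {w : List T} (hw : w ∈ block a i j) : ∀ t ∈ w, t ∈ Set.range a := by
  obtain ⟨l, -, -, rfl⟩ := hw
  exact fun t ht ↦ (List.mem_map.1 ht).imp fun _ h ↦ h.2

end Blocks

lemma mem_block_self {T ι : Type*} [PartialOrder ι] {a : ι → T} {i : ι} {w : List T} :
    w ∈ block a i i ↔ ∃ n, w = List.replicate n (a i) := by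
  constructor
  · rintro ⟨l, -, hl, rfl⟩
    have hconst : l = List.replicate l.length i :=
      List.eq_replicate_of_mem fun x hx ↦ le_antisymm (hl x hx).2 (hl x hx).1
    exact ⟨l.length, by rw [← List.map_replicate, ← hconst]⟩
  · rintro ⟨n, rfl⟩
    refine ⟨List.replicate n i, List.pairwise_replicate.2 (.inr le_rfl), fun x hx ↦ ?_,
      List.map_replicate.symm⟩
    rw [List.eq_of_mem_replicate hx]
    exact ⟨le_rfl, le_rfl⟩

lemma letterBounded_le_block {T : Type} {m : ℕ} (a : Fin m → T) {i j : Fin m} (hi : IsBot i)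
    (hj : IsTop j) : letterBounded a ≤ block a i j := by
  rintro _ ⟨k, rfl⟩
  refine ⟨(List.ofFn fun x ↦ List.replicate (k x) x).flatten, ?_, fun x _ ↦ ⟨hi x, hj x⟩, ?_⟩
  · refine List.pairwise_flatten.2
      ⟨fun l hl ↦ ?_, List.pairwise_ofFn.2 fun x y hxy x' hx y' hy ↦ ?_⟩
    · obtain ⟨x, rfl⟩ := List.mem_ofFn.1 hl
      exact List.pairwise_replicate.2 (.inr le_rfl)
    · rw [List.eq_of_mem_replicate hx, List.eq_of_mem_replicate hy]
      exact hxy.le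
  · simp only [List.map_flatten, List.map_ofFn, Function.comp_def, List.map_replicate]

/-- A set of sentential forms that contains the right-hand sides of the rules and all sublists of
its members, hence every form met while peeling off first symbols and expanding nonterminals. -/
structure IsClosedFormSet {T N : Type*} (R : Finset (ContextFreeRule T N))
    (F : Finset (List (Symbol T N))) : Prop where
  output_mem : ∀ r ∈ R, r.output ∈ F
  sublist_mem : ∀ {α β : List (Symbol T N)}, α ∈ F → β.Sublist α → β ∈ F

lemma exists_isClosedFormSet {T N : Type*} (R : Finset (ContextFreeRule T N))
    (α : List (Symbol T N)) : ∃ F, α ∈ F ∧ IsClosedFormSet R F := by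
  classical
  let G : Finset (List (Symbol T N)) := insert α (R.image (·.output))
  let F := G.biUnion fun γ ↦ γ.sublists.toFinset
  have hF {β : List (Symbol T N)} : β ∈ F ↔ ∃ γ ∈ G, β.Sublist γ := by simp [F]
  refine ⟨F, hF.2 ⟨α, by simp [G], .refl α⟩, fun r hr ↦ ?_, fun hβ hγ ↦ ?_⟩
  · exact hF.2 ⟨r.output, Finset.mem_insert_of_mem (Finset.mem_image_of_mem _ hr), .refl _⟩
  · obtain ⟨δ, hδ, hle⟩ := hF.1 hβ
    exact hF.2 ⟨δ, hδ, hγ.trans hle⟩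

section Pieces

variable {T N : Type*} {m B : ℕ} {F : Finset (List (Symbol T N))} {a : Fin m → T}
  {R : Finset (ContextFreeRule T N)} {i j k : Fin m}

/-- The words of `a_i^* ⋯ a_j^*` derivable from the sentential form `α`. -/
def core (a : Fin m → T) (R : Finset (ContextFreeRule T N)) (i j : Fin m)
    (α : List (Symbol T N)) : Language T :=
  formLanguage R α ⊓ block a i j

lemma core_mul_core_le {α β γ : List (Symbol T N)}
    (h : formLanguage R β * formLanguage R γ ≤ formLanguage R α) (hik : i ≤ k) (hkj : k ≤ j) :
    core a R i k β * core a R k j γ ≤ core a R i j α :=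
  le_inf ((mul_le_mul' inf_le_left inf_le_left).trans h)
    ((mul_le_mul' inf_le_right inf_le_right).trans (block_mul_block_le hik hkj))

lemma exists_progression_le_core {α : List (Symbol T N)} {v : List T}
    (hB : IsProgressionUnion B (exponents R (a i) α)) (hv : v ∈ core a R i i α) :
    ∃ f ≤ B, ∃ d ≤ B,
      v ∈ ({List.replicate f (a i)} : Language T) * {List.replicate d (a i)}∗ ∧
      ({List.replicate f (a i)} : Language T) * {List.replicate d (a i)}∗ ≤ core a R i i α := by
  obtain ⟨hvα, hvi⟩ := hv
  obtain ⟨n, rfl⟩ := mem_block_self.1 hvi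
  obtain ⟨f, hf, d, hd, ⟨k, rfl⟩, hall⟩ := hB n hvα
  refine ⟨f, hf, d, hd, mem_replicate_mul_kstar.2 ⟨k, rfl⟩, fun w hw ↦ ?_⟩
  obtain ⟨k', rfl⟩ := mem_replicate_mul_kstar.1 hw
  exact ⟨hall k', mem_block_self.2 ⟨_, rfl⟩⟩

/-- A nonterminal of the ultralinear grammar: it stands for the words of `a_lo^* ⋯ a_hi^*`
derivable from `form`, padded by powers of `a_lo ^ left` and of `a_hi ^ right`. -/
structure Piece (m B : ℕ) (F : Finset (List (Symbol T N))) where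
  lo : Fin m
  hi : Fin m
  lo_lt_hi : lo < hi
  form : F
  left : Fin (B + 1)
  right : Fin (B + 1)

namespace Piece

instance : Finite (Piece m B F) := by
  refine Finite.of_injective (β := Fin m × Fin m × F × Fin (B + 1) × Fin (B + 1))
    (fun x ↦ (x.lo, x.hi, x.form, x.left, x.right)) ?_
  rintro ⟨⟩ ⟨⟩ h
  simpa using h

/-- The language a piece stands for. -/
def language (a : Fin m → T) (R : Finset (ContextFreeRule T N)) (x : Piece m B F) : Language T :=
  {List.replicate x.left (a x.lo)}∗ * core a R x.lo x.hi x.form *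
    {List.replicate x.right (a x.hi)}∗

/-- The number of letter boundaries inside a piece. It bounds how many nonterminals a sentential
form derived from the piece can contain. -/
def weight (x : Piece m B F) : ℕ := x.hi - x.lo

lemma weight_pos (x : Piece m B F) : 0 < x.weight :=
  Nat.sub_pos_of_lt x.lo_lt_hi

/-- The piece for `α` between the letters `i` and `j`, without padding. -/
def unpadded (B : ℕ) (hij : i < j) (α : F) : Piece m B F := ⟨i, j, hij, α, 0, 0⟩

/-- The piece for `α` between the letters `i` and `j`, padded on the left by powers of `a_i ^ d`. -/
def leftPadded (hij : i < j) (α : F) (d : Fin (B + 1)) : Piece m B F := ⟨i, j, hij, α, d, 0⟩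

/-- The piece for `α` between the letters `i` and `j`, padded on the right by powers of
`a_j ^ d`. -/
def rightPadded (hij : i < j) (α : F) (d : Fin (B + 1)) : Piece m B F := ⟨i, j, hij, α, 0, d⟩

lemma language_leftPadded (hij : i < j) (α : F) (d : Fin (B + 1)) :
    (leftPadded hij α d).language a R = {List.replicate d (a i)}∗ * core a R i j α := by
  simp [language, leftPadded, kstar_singleton_nil]

lemma language_rightPadded (hij : i < j) (α : F) (d : Fin (B + 1)) :
    (rightPadded hij α d).language a R = core a R i j α * {List.replicate d (a j)}∗ := by
  simp [language, rightPadded, kstar_singleton_nil]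

lemma language_unpadded (hij : i < j) (α : F) :
    (unpadded B hij α).language a R = core a R i j α := by
  simp [language, unpadded, kstar_singleton_nil]

/-- The rules of the ultralinear grammar. Right-hand sides need at most `B` letters next to a
nonterminal, or two nonterminals. -/
noncomputable def rules (a : Fin m → T) (R : Finset (ContextFreeRule T N)) (B : ℕ)
    (F : Finset (List (Symbol T N))) : Finset (ContextFreeRule T (Piece m B F)) :=
  soundRules (Set.range a) (B + 2) (language a R) weight

/-- The language generated from a piece by the ultralinear grammar. -/
def generated (a : Fin m → T) (R : Finset (ContextFreeRule T N)) (x : Piece m B F) : Language T :=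
  Ultralinear.generated (Set.range a) (B + 2) (language a R) weight x

lemma kstar_mul_generated_le (hij : i < j) (α : F) (d : Fin (B + 1)) :
    {List.replicate d (a i)}∗ * (unpadded B hij α).generated a R ≤
      (leftPadded hij α d).generated a R := by
  refine kstar_mul_le ?_ ?_
  · refine generated_le_generated (by omega) ?_ le_rfl
    rw [language_unpadded, language_leftPadded]
    exact le_mul_of_one_le_left' one_le_kstar
  · refine singleton_mul_generated_le ?_ (mem_range_of_mem_replicate a i d) ?_ le_rfl
    · rw [List.length_replicate]
      omega
    · rw [language_leftPadded, ← mul_assoc]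
      exact mul_le_mul_left mul_kstar_le_kstar _

lemma generated_mul_kstar_le (hij : i < j) (α : F) (d : Fin (B + 1)) :
    (unpadded B hij α).generated a R * {List.replicate d (a j)}∗ ≤
      (rightPadded hij α d).generated a R := by
  refine mul_kstar_le ?_ ?_
  · refine generated_le_generated (by omega) ?_ le_rfl
    rw [language_unpadded, language_rightPadded]
    exact le_mul_of_one_le_right' one_le_kstar
  · refine generated_mul_singleton_le ?_ (mem_range_of_mem_replicate a j d) ?_ le_rfl
    · rw [List.length_replicate]
      omega
    · rw [language_rightPadded, mul_assoc]
      exact mul_le_mul_right kstar_mul_le_kstar _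

variable {α β γ : F}

lemma core_mul_generated_le (hB : IsProgressionUnion B (exponents R (a i) β))
    (h : formLanguage R β * formLanguage R γ ≤ formLanguage R α) (hij : i < j) :
    core a R i i β * (unpadded B hij γ).generated a R ≤ (unpadded B hij α).generated a R := by
  rintro _ ⟨u, hu, v, hv, rfl⟩
  obtain ⟨f, hf, d, hd, huP, hP⟩ := exists_progression_le_core hB hu
  lift d to Fin (B + 1) using Nat.lt_succ_of_le hd
  have hpad : {List.replicate f (a i)} * (leftPadded hij γ d).generated a R ≤
      (unpadded B hij α).generated a R := by
    refine singleton_mul_generated_le ?_ (mem_range_of_mem_replicate a i f) ?_ le_rfl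
    · rw [List.length_replicate]
      omega
    · rw [language_leftPadded, language_unpadded, ← mul_assoc]
      exact (mul_le_mul_left hP _).trans (core_mul_core_le h le_rfl hij.le)
  have hmem := Language.append_mem_mul huP hv
  rw [mul_assoc] at hmem
  exact hpad (mul_le_mul_right (kstar_mul_generated_le hij γ d) _ hmem)

lemma generated_mul_core_le (hB : IsProgressionUnion B (exponents R (a j) γ))
    (h : formLanguage R β * formLanguage R γ ≤ formLanguage R α) (hij : i < j) :
    (unpadded B hij β).generated a R * core a R j j γ ≤ (unpadded B hij α).generated a R := by
  rintro _ ⟨u, hu, v, hv, rfl⟩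
  obtain ⟨f, hf, d, hd, hvP, hP⟩ := exists_progression_le_core hB hv
  lift d to Fin (B + 1) using Nat.lt_succ_of_le hd
  rw [replicate_mul_kstar_comm] at hvP hP
  have hpad : (rightPadded hij β d).generated a R * {List.replicate f (a j)} ≤
      (unpadded B hij α).generated a R := by
    refine generated_mul_singleton_le ?_ (mem_range_of_mem_replicate a j f) ?_ le_rfl
    · rw [List.length_replicate]
      omega
    · rw [language_rightPadded, language_unpadded, mul_assoc]
      exact (mul_le_mul_right hP _).trans (core_mul_core_le h hij.le le_rfl)
  have hmem := Language.append_mem_mul hu hvP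
  rw [← mul_assoc] at hmem
  exact hpad (mul_le_mul_left (generated_mul_kstar_le hij β d) _ hmem)

lemma generated_mul_generated_le (h : formLanguage R β * formLanguage R γ ≤ formLanguage R α)
    (hik : i < k) (hkj : k < j) :
    (unpadded B hik β).generated a R * (unpadded B hkj γ).generated a R ≤
      (unpadded B (hik.trans hkj) α).generated a R := by
  refine Ultralinear.generated_mul_generated_le (by omega) ?_ ?_
  · simp only [language_unpadded]
    exact core_mul_core_le h hik.le hkj.le
  · simp only [weight, unpadded]
    omega

lemma append_mem_generated
    (hB : ∀ (i : Fin m) (α : F), IsProgressionUnion B (exponents R (a i) α))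
    (h : formLanguage R β * formLanguage R γ ≤ formLanguage R α) {u v : List T}
    (hu : u ∈ formLanguage R β) (hv : v ∈ formLanguage R γ)
    (ihu : ∀ {i j} (hij : i < j), u ∈ block a i j → u ∈ (unpadded B hij β).generated a R)
    (ihv : ∀ {i j} (hij : i < j), v ∈ block a i j → v ∈ (unpadded B hij γ).generated a R)
    (hij : i < j) (huv : u ++ v ∈ block a i j) :
    u ++ v ∈ (unpadded B hij α).generated a R := by
  obtain ⟨k, hik, hkj, hub, hvb⟩ := exists_mem_block_of_append_mem_block hij.le huv
  rcases hik.eq_or_lt with rfl | hik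
  · exact core_mul_generated_le (hB i β) h hij
      (Language.append_mem_mul ⟨hu, hub⟩ (ihv hij hvb))
  rcases hkj.eq_or_lt with rfl | hkj
  · exact generated_mul_core_le (hB k γ) h hij
      (Language.append_mem_mul (ihu hij hub) ⟨hv, hvb⟩)
  · exact generated_mul_generated_le h hik hkj
      (Language.append_mem_mul (ihu hik hub) (ihv hkj hvb))

lemma mem_generated_of_length_le {w : List T} (hlen : w.length ≤ B + 2) (hij : i < j)
    (hw : w ∈ core a R i j α) : w ∈ (unpadded B hij α).generated a R := by
  refine mem_generated_of_mem hlen (mem_range_of_mem_block hw.2) ?_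
  rwa [language_unpadded]

lemma core_le_generated (hF : IsClosedFormSet R F)
    (hB : ∀ (i : Fin m) (α : F), IsProgressionUnion B (exponents R (a i) α)) (α : F)
    (hij : i < j) : core a R i j α ≤ (unpadded B hij α).generated a R := by
  rintro w ⟨hw, hb⟩
  obtain ⟨α, hα⟩ := α
  change Yields R α w at hw
  induction hw generalizing i j with
  | nil => exact mem_generated_of_length_le (by simp) hij ⟨.nil, hb⟩
  | @terminal α v t hv ih =>
    have ht : [.terminal t] ∈ F := hF.sublist_mem hα (by simp)
    have hαF : α ∈ F := hF.sublist_mem hα (List.sublist_cons_self _ _)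
    have htt : [t] ∈ formLanguage R [.terminal t] := .terminal t .nil
    exact append_mem_generated (β := ⟨_, ht⟩) (γ := ⟨α, hαF⟩) hB (formLanguage_cons R _ α).ge
      htt hv (fun hij h ↦ mem_generated_of_length_le (by simp) hij ⟨htt, h⟩)
      (fun hij h ↦ ih hij h hαF) hij hb
  | @nonterminal α u v r hr hu hv ihu ihv =>
    have hαF : α ∈ F := hF.sublist_mem hα (List.sublist_cons_self _ _)
    refine append_mem_generated (β := ⟨_, hF.output_mem r hr⟩) (γ := ⟨α, hαF⟩) hB ?_
      hu hv (fun hij h ↦ ihu hij h _) (fun hij h ↦ ihv hij h hαF) hij hb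
    rintro _ ⟨u', hu', v', hv', rfl⟩
    exact .nonterminal hr hu' hv'

lemma generated_unpadded (hF : IsClosedFormSet R F)
    (hB : ∀ (i : Fin m) (α : F), IsProgressionUnion B (exponents R (a i) α)) (α : F)
    (hij : i < j) : (unpadded B hij α).generated a R = core a R i j α :=
  ((generated_le _).trans_eq (language_unpadded hij α)).antisymm (core_le_generated hF hB α hij)

end Piece

end Pieces

end Ultralinear

open Ultralinear in
theorem stmt_11_general {T : Type} {m : ℕ} (hm : 2 ≤ m) (a : Fin m → T) (L : Language T)
    (hL : L.IsContextFree) (hsub : L ≤ letterBounded a) :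
    ∃ g : ContextFreeGrammar T,
      g.language = L ∧
      ∀ α : List (Symbol T g.NT),
        g.Derives [Symbol.nonterminal g.initial] α → α.countP Symbol.isNT ≤ m - 1 := by
  obtain ⟨g, rfl⟩ := hL
  obtain ⟨F, hS, hF⟩ := exists_isClosedFormSet g.rules [.nonterminal g.initial]
  obtain ⟨B, hB⟩ := exists_uniform_isProgressionUnion
    (fun x : Fin m × F ↦ exponents g.rules (a x.1) x.2)
    fun x ↦ exists_isProgressionUnion_exponents g.rules (a x.1) x.2
  let first : Fin m := ⟨0, by omega⟩
  let last : Fin m := ⟨m - 1, by omega⟩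
  have hlt : first < last := Fin.mk_lt_mk.2 (by omega)
  let start : Piece m B F := .unpadded B hlt ⟨_, hS⟩
  have hblock : g.language ≤ block a first last := hsub.trans <|
    letterBounded_le_block a (fun i ↦ Nat.zero_le i) fun i ↦ Nat.le_sub_one_of_lt i.isLt
  refine ⟨⟨Piece m B F, start, Piece.rules a g.rules B F⟩, ?_, fun α hα ↦ ?_⟩
  · calc
      _ = start.generated a g.rules := language_eq_formLanguage _
      _ = core a g.rules first last [.nonterminal g.initial] :=
        Piece.generated_unpadded hF (fun i α ↦ hB (i, α)) _ hlt
      _ = g.language := by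
        rw [core, ← language_eq_formLanguage, inf_eq_left.2 hblock]
  · exact countP_isNT_le_of_derives _ Piece.weight_pos
      (fun r hr ↦ (mem_soundRules.1 hr).2.formWeight_output_le) hα

theorem stmt_11 {T : Type} {m : ℕ} (hm : 2 ≤ m) (a : Fin m → T) (ha : Function.Injective a)
    (L : Language T) (hL : L.IsContextFree) (hsub : L ≤ letterBounded a) (hε : [] ∉ L) :
    ∃ g : ContextFreeGrammar T,
      g.language = L ∧
      ∀ α : List (Symbol T g.NT),
        g.Derives [Symbol.nonterminal g.initial] α → α.countP Symbol.isNT ≤ m - 1 :=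
  stmt_11_general hm a L hL hsub
end

section
/- Let m ≥ 2 and let w_1, …, w_m be nonempty words over an alphabet Σ. Every context-free language L ⊆ w_1^* w_2^* ⋯ w_m^* with ε ∉ L is generated by some context-free grammar G such that every sentential form derivable from the start symbol of G contains at most m − 1 occurrences of nonterminals (i.e., L is ultralinear of rank at most m − 1). -/
/-- The word-bounded language `w_1^* w_2^* ⋯ w_m^*`. -/
def wordBounded {T : Type} {m : ℕ} (w : Fin m → List T) : Language T :=
  { z | ∃ k : Fin m → ℕ,
      z = (List.ofFn fun i : Fin m => (List.replicate (k i) (w i)).flatten).flatten }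

/-!
Read a word of `L` along the automaton for `w₁* ⋯ wₘ*`, and binarize its derivation tree; each node
then carries the states of the automaton before and after its word. Call a node flat if both states
lie in the same block. The words of a flat node are determined by their lengths, and a context-free
language over one letter is ultimately periodic, so each of them is a bounded word followed by
copies of a loop of a fixed length. A loop can also be pumped at the start of such a word, so it can
always be moved next to the sibling node, which can generate it before generating its own word.
Hence flat subtrees may be replaced by bounded words, and only the other nodes need nonterminals.
Let such a nonterminal count for the number of blocks that it advances: this number is positive and
is additive when such a node branches into two of them, so a sentential form never contains more
than `m - 1` nonterminals.

Naming every nonterminal by the language that it should generate, and admitting all rules that are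
consistent with these names and with the count, leaves only the completeness of the rules to prove.
-/

open scoped Computability

theorem exists_base_of_mapsTo_add {s : Set ℕ} {P : ℕ} (hP : 0 < P) (h : s.MapsTo (P + ·) s) :
    ∃ M, ∀ n ∈ s, ∃ b ≤ M, ∃ k, n = b + k * P ∧ ∀ j, b + j * P ∈ s := by
  let least (r : ℕ) : ℕ := sInf {n ∈ s | n % P = r}
  refine ⟨(Finset.range P).sup least, fun n hn => ⟨least (n % P), ?_, ?_⟩⟩
  · exact Finset.le_sup (Finset.mem_range.2 (n.mod_lt hP))
  have hmem : n ∈ {l ∈ s | l % P = n % P} := ⟨hn, rfl⟩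
  obtain ⟨hleast, hmod⟩ : least (n % P) ∈ s ∧ least (n % P) % P = n % P := Nat.sInf_mem ⟨n, hmem⟩
  have hle : least (n % P) ≤ n := Nat.sInf_le hmem
  obtain ⟨k, hk⟩ := (Nat.modEq_iff_dvd' hle).1 hmod
  refine ⟨k, by rw [mul_comm]; omega, fun j => ?_⟩
  simpa [add_comm] using h.iterate j hleast

/-- A grammar over a one-letter alphabet with rules `X → aⁿ` (`leaf X n`) and `X → Y Z`
(`branch X Y Z`). Words are identified with their lengths, and neither the set of nonterminals nor
the set of rules needs to be finite. -/
structure UnaryGrammar (N : Type*) where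
  leaf : N → ℕ → Prop
  branch : N → N → N → Prop

namespace UnaryGrammar

variable {N : Type*} {G : UnaryGrammar N} {U V : Finset N} {X : N} {n : ℕ}

/-- The nonterminal has a derivation tree of a word of the given length, all of whose nonterminals
lie in `U`. -/
inductive Derives (G : UnaryGrammar N) (U : Finset N) : N → ℕ → Prop
  | leaf {X : N} {n : ℕ} : X ∈ U → G.leaf X n → Derives G U X n
  | branch {X Y Z : N} {k n : ℕ} :
      X ∈ U → G.branch X Y Z → Derives G U Y k → Derives G U Z n → Derives G U X (k + n)

/-- The lengths of the words derived from a nonterminal inside `U`. -/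
def lengths (G : UnaryGrammar N) (U : Finset N) (X : N) : Set ℕ := {n | G.Derives U X n}

theorem Derives.mem (h : G.Derives U X n) : X ∈ U := by
  cases h <;> assumption

theorem Derives.mono (hVU : V ⊆ U) (h : G.Derives V X n) : G.Derives U X n := by
  induction h with
  | leaf hX hl => exact .leaf (hVU hX) hl
  | branch hX hb _ _ ihY ihZ => exact .branch (hVU hX) hb ihY ihZ

-- The factorization cuts the tree of `Z` at an occurrence of `X` below which `X` does not recur.
theorem Derives.avoids_or_factors [DecidableEq N] (hleaf : ∀ X n, G.leaf X n → n ≤ 1)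
    (hVU : V ⊆ U) {X : N} {B : ℕ} (hB : 1 ≤ B)
    (hbound : ∀ Y n, G.Derives (V.erase X) Y n → n ≤ B) {Z : N} (h : G.Derives V Z n) :
    G.Derives (V.erase X) Z n ∨
      ∃ d k, n = d + k ∧ k ≤ 2 * B ∧ (G.lengths U X).MapsTo (d + ·) (G.lengths U Z) := by
  induction h with
  | @leaf Z n hZ hl =>
    by_cases hZX : Z = X
    · subst hZX
      have := hleaf _ _ hl
      exact .inr ⟨0, n, by omega, by omega, fun l hl => by simpa using hl⟩
    · exact .inl (.leaf (Finset.mem_erase.2 ⟨hZX, hZ⟩) hl)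
  | @branch Z Y Y' k n hZ hb hY hY' ihY ihY' =>
    rcases ihY with hYX | ⟨d, k', rfl, hk', hd⟩
    · rcases ihY' with hYX' | ⟨d, k', rfl, hk', hd⟩
      · by_cases hZX : Z = X
        · subst hZX
          have := hbound _ _ hYX
          have := hbound _ _ hYX'
          exact .inr ⟨0, k + n, by omega, by omega, fun l hl => by simpa using hl⟩
        · exact .inl (.branch (Finset.mem_erase.2 ⟨hZX, hZ⟩) hb hYX hYX')
      · refine .inr ⟨k + d, k', by omega, hk', fun l hl => ?_⟩
        have : G.Derives U Z (k + (d + l)) := .branch (hVU hZ) hb (hY.mono hVU) (hd hl)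
        rwa [← add_assoc] at this
    · refine .inr ⟨d + n, k', by omega, hk', fun l hl => ?_⟩
      have : G.Derives U Z (d + l + n) := .branch (hVU hZ) hb (hd hl) (hY'.mono hVU)
      rwa [add_right_comm] at this

/-- The words derived from a nonterminal can be pumped: some positive length can be added to any of
their lengths. -/
def IsPumpable (G : UnaryGrammar N) (U : Finset N) (X : N) : Prop :=
  ∃ d, 0 < d ∧ (G.lengths U X).MapsTo (d + ·) (G.lengths U X)

theorem Derives.le_two_pow_card (hleaf : ∀ X n, G.leaf X n → n ≤ 1) (hVU : V ⊆ U)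
    (hV : ∀ X ∈ V, ¬ G.IsPumpable U X) (h : G.Derives V X n) : n ≤ 2 ^ V.card := by
  classical
  generalize hc : V.card = c
  induction c generalizing V X n with
  | zero => exact absurd h.mem (by simp [Finset.card_eq_zero.1 hc])
  | succ c ih =>
    have hbound : ∀ Y k, G.Derives (V.erase X) Y k → k ≤ 2 ^ c := fun Y k hY =>
      ih ((V.erase_subset X).trans hVU) (fun Z hZ => hV Z (Finset.mem_of_mem_erase hZ)) hY
        (by rw [Finset.card_erase_of_mem h.mem, hc, Nat.add_sub_cancel])
    rcases h.avoids_or_factors hleaf hVU Nat.one_le_two_pow hbound with hX | ⟨d, k, rfl, hk, hd⟩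
    · exact absurd hX.mem (V.notMem_erase X)
    · obtain rfl : d = 0 := by_contra fun hd0 => hV X h.mem ⟨d, Nat.pos_of_ne_zero hd0, hd⟩
      rw [zero_add, pow_succ']
      exact hk

theorem exists_pos_forall_isPumpable_mapsTo (G : UnaryGrammar N) (U : Finset N) :
    ∃ P, 0 < P ∧ ∀ X ∈ U, G.IsPumpable U X → (G.lengths U X).MapsTo (P + ·) (G.lengths U X) := by
  have hd : ∀ X, ∃ d, 0 < d ∧
      (G.IsPumpable U X → (G.lengths U X).MapsTo (d + ·) (G.lengths U X)) := fun X => by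
    by_cases hX : G.IsPumpable U X
    · exact hX.imp fun d hd => ⟨hd.1, fun _ => hd.2⟩
    · exact ⟨1, one_pos, fun h => absurd h hX⟩
  choose d hdpos hd using hd
  refine ⟨∏ X ∈ U, d X, Finset.prod_pos fun X _ => hdpos X, fun X hXU hX => ?_⟩
  obtain ⟨q, hq⟩ : d X ∣ ∏ X ∈ U, d X := Finset.dvd_prod_of_mem d hXU
  have hiterate := (hd X hX).iterate q
  rwa [add_left_iterate, smul_eq_mul, mul_comm, ← hq] at hiterate

theorem Derives.avoids_or_add {P : ℕ} (hpump : ∀ X n, G.Derives U X n → X ∉ V →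
    G.Derives U X (P + n)) (h : G.Derives U X n) : G.Derives V X n ∨ G.Derives U X (P + n) := by
  induction h with
  | @leaf X n hX hl =>
    by_cases hXV : X ∈ V
    · exact .inl (.leaf hXV hl)
    · exact .inr (hpump X n (.leaf hX hl) hXV)
  | @branch X Y Z k n hX hb hY hZ ihY ihZ =>
    by_cases hXV : X ∈ V
    · rcases ihY with hY' | hY'
      · rcases ihZ with hZ' | hZ'
        · exact .inl (.branch hXV hb hY' hZ')
        · exact .inr (add_left_comm k P n ▸ .branch hX hb hY hZ')
      · exact .inr (add_assoc P k n ▸ .branch hX hb hY' hZ)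
    · exact .inr (hpump X (k + n) (.branch hX hb hY hZ) hXV)

theorem exists_pos_add_mem_lengths (hleaf : ∀ X n, G.leaf X n → n ≤ 1) (U : Finset N) :
    ∃ P, 0 < P ∧ ∀ X, ∀ n ∈ G.lengths U X, 2 ^ U.card < n → P + n ∈ G.lengths U X := by
  classical
  let V := U.filter fun X => ¬ G.IsPumpable U X
  have hVU : V ⊆ U := Finset.filter_subset _ _
  obtain ⟨P, hP, hperiod⟩ := exists_pos_forall_isPumpable_mapsTo G U
  have hpump : ∀ X n, G.Derives U X n → X ∉ V → G.Derives U X (P + n) := fun X n h hXV =>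
    hperiod X h.mem (by_contra fun hX => hXV (Finset.mem_filter.2 ⟨h.mem, hX⟩)) h
  refine ⟨P, hP, fun X n hn hlt => (hn.avoids_or_add hpump).resolve_left fun hVn => hlt.not_ge ?_⟩
  calc n ≤ 2 ^ V.card := hVn.le_two_pow_card hleaf hVU fun Y hY => (Finset.mem_filter.1 hY).2
    _ ≤ 2 ^ U.card := Nat.pow_le_pow_right two_pos (Finset.card_le_card hVU)

theorem exists_common_period (hleaf : ∀ X n, G.leaf X n → n ≤ 1) (U : Finset N) {P₀ : ℕ}
    (hP₀ : 0 < P₀) :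
    ∃ P M, P₀ ∣ P ∧ ∀ X, ∀ n ∈ G.lengths U X, n ≤ M ∨
      ∃ b ≤ M, ∃ k, n = b + k * P ∧ ∀ j, b + j * P ∈ G.lengths U X := by
  obtain ⟨P₁, hP₁, hpump⟩ := exists_pos_add_mem_lengths hleaf U
  let long (X : N) : Set ℕ := {n ∈ G.lengths U X | 2 ^ U.card < n}
  have hlong : ∀ X, (long X).MapsTo (P₀ * P₁ + ·) (long X) := fun X => by
    have h : (long X).MapsTo (P₁ + ·) (long X) := fun n hn =>
      ⟨hpump X n hn.1 hn.2, hn.2.trans_le (Nat.le_add_left n P₁)⟩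
    simpa using h.iterate P₀
  choose M hM using fun X => exists_base_of_mapsTo_add (Nat.mul_pos hP₀ hP₁) (hlong X)
  refine ⟨P₀ * P₁, max (2 ^ U.card) (U.sup M), dvd_mul_right P₀ P₁, fun X n hn => ?_⟩
  refine (le_or_gt n (2 ^ U.card)).imp le_max_of_le_left fun hlt => ?_
  obtain ⟨b, hb, k, hk, hmem⟩ := hM X n ⟨hn, hlt⟩
  have hMX : M X ≤ U.sup M := Finset.le_sup (Derives.mem hn)
  exact ⟨b, le_max_of_le_right (hb.trans hMX), k, hk, fun j => (hmem j).1⟩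

end UnaryGrammar

section Yields

variable {T : Type} {g : ContextFreeGrammar T} {α β : List (Symbol T g.NT)} {z : List T}

/-- A single symbol expands to a sentential form: a nonterminal by a rule, and a terminal, for
uniformity, to itself. -/
inductive Expands (g : ContextFreeGrammar T) : Symbol T g.NT → List (Symbol T g.NT) → Prop
  | terminal (a : T) : Expands g (.terminal a) [.terminal a]
  | rule {r : ContextFreeRule T g.NT} : r ∈ g.rules → Expands g (.nonterminal r.input) r.output

/-- A sentential form yields a word. The derivation is presented as a binary tree, in which a
sentential form branches into the expansion of its first symbol and its tail. -/
inductive Yields (g : ContextFreeGrammar T) : List (Symbol T g.NT) → List T → Prop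
  | word {z : List T} : z.length ≤ 1 → Yields g (z.map .terminal) z
  | cons {s : Symbol T g.NT} {γ β : List (Symbol T g.NT)} {u v : List T} :
      Expands g s γ → Yields g γ u → Yields g β v → Yields g (s :: β) (u ++ v)

theorem Yields.of_append (h : Yields g (α ++ β) z) :
    ∃ u v, z = u ++ v ∧ Yields g α u ∧ Yields g β v := by
  generalize hX : α ++ β = X at h
  induction h generalizing α with
  | @word z hz =>
    obtain ⟨u, v, rfl, rfl, rfl⟩ := List.map_eq_append_iff.1 hX.symm
    rw [List.length_append] at hz
    exact ⟨u, v, rfl, .word (by omega), .word (by omega)⟩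
  | @cons s γ δ u v hs hγ hδ _ ih =>
    rcases List.append_eq_cons_iff.1 hX with ⟨rfl, rfl⟩ | ⟨α', rfl, rfl⟩
    · exact ⟨[], u ++ v, rfl, .word (z := []) (by simp), .cons hs hγ hδ⟩
    · obtain ⟨v₁, v₂, rfl, hα', hβ⟩ := ih rfl
      exact ⟨u ++ v₁, v₂, (List.append_assoc ..).symm, .cons hs hγ hα', hβ⟩

theorem Yields.append {u v : List T} (hα : Yields g α u) (hβ : Yields g β v) :
    Yields g (α ++ β) (u ++ v) := by
  induction hα with
  | @word z hz =>
    match z, hz with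
    | [], _ => exact hβ
    | [a], h => exact .cons (.terminal a) (.word h) hβ
  | cons hs hγ _ _ ih => exact List.append_assoc .. ▸ .cons hs hγ ih

theorem Yields.map_terminal (g : ContextFreeGrammar T) (z : List T) :
    Yields g (z.map .terminal) z := by
  induction z with
  | nil => exact .word (z := []) (Nat.zero_le 1)
  | cons a z ih => exact .cons (.terminal a) (.word (z := [a]) le_rfl) ih

theorem Yields.of_derives (h : g.Derives α (z.map .terminal)) : Yields g α z := by
  induction h using Relation.ReflTransGen.head_induction_on with
  | refl => exact .map_terminal g z
  | head h _ ih =>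
    obtain ⟨r, hr, hrw⟩ := h
    obtain ⟨p, q, rfl, rfl⟩ := hrw.exists_parts
    obtain ⟨_, v, rfl, hpr, hq⟩ := ih.of_append
    obtain ⟨u, y, rfl, hp, hr'⟩ := hpr.of_append
    have hinput : Yields g [.nonterminal r.input] (y ++ []) :=
      .cons (.rule hr) hr' (.word (z := []) (Nat.zero_le 1))
    rw [List.append_nil] at hinput
    exact (hp.append hinput).append hq

theorem Expands.derives {s : Symbol T g.NT} {γ : List (Symbol T g.NT)} (h : Expands g s γ) :
    g.Derives [s] γ := by
  cases h with
  | terminal a => exact .refl _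
  | rule hr => exact ContextFreeGrammar.Produces.single ⟨_, hr, .input_output⟩

theorem Yields.derives (h : Yields g α z) : g.Derives α (z.map .terminal) := by
  induction h with
  | word => exact .refl _
  | @cons s γ β u v hs _ _ ihγ ihβ =>
    rw [List.map_append]
    exact ((hs.derives.trans ihγ).append_right β).trans (ihβ.append_left _)

theorem mem_language_iff_yields : z ∈ g.language ↔ Yields g [.nonterminal g.initial] z :=
  ⟨Yields.of_derives, Yields.derives⟩

/-- The sentential forms that occur in the binary derivation trees from the initial symbol lie in
this finite set of sublists. -/
def items (g : ContextFreeGrammar T) : Set (List (Symbol T g.NT)) :=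
  {X | List.Sublist X [.nonterminal g.initial] ∨ ∃ r ∈ g.rules, List.Sublist X r.output}

theorem finite_items (g : ContextFreeGrammar T) : (items g).Finite := by
  have hsub : ∀ Y : List (Symbol T g.NT), {X | List.Sublist X Y}.Finite := fun Y =>
    Y.sublists.finite_toSet.subset fun X hX => List.mem_sublists.2 hX
  refine ((hsub [.nonterminal g.initial]).union
    (g.rules.finite_toSet.biUnion fun r _ => hsub r.output)).subset ?_
  rintro X (hX | ⟨r, hr, hX⟩)
  · exact .inl hX
  · exact .inr (Set.mem_biUnion hr hX)

theorem mem_items_of_sublist (hsub : α.Sublist β) (hβ : β ∈ items g) : α ∈ items g :=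
  hβ.imp hsub.trans fun ⟨r, hr, h⟩ => ⟨r, hr, hsub.trans h⟩

theorem Expands.mem_items {s : Symbol T g.NT} {γ : List (Symbol T g.NT)} (h : Expands g s γ)
    (hs : s :: β ∈ items g) : γ ∈ items g := by
  cases h with
  | terminal a => exact mem_items_of_sublist (List.singleton_sublist.2 (by simp)) hs
  | rule hr => exact .inr ⟨_, hr, .refl _⟩

end Yields

section Paths

variable {T : Type} {m : ℕ} {w : Fin m → List T}

/-- The states of the automaton reading `w₁* ⋯ wₘ*`: in the state `(i, x)` it is inside the block
`wᵢ*`, and `x` is the rotation of `wᵢ` that is about to be read. -/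
abbrev BlockState (T : Type) (m : ℕ) := Fin m × List T

/-- The automaton reading `w₁* ⋯ wₘ*` can go from one state to another along a word. -/
inductive WordPath (w : Fin m → List T) : BlockState T m → List T → BlockState T m → Prop
  | nil (p : BlockState T m) : WordPath w p [] p
  | letter {i : Fin m} {a : T} {x z : List T} {q : BlockState T m} :
      WordPath w (i, x ++ [a]) z q → WordPath w (i, a :: x) (a :: z) q
  | next {i j : Fin m} {z : List T} {q : BlockState T m} :
      i < j → WordPath w (j, w j) z q → WordPath w (i, w i) z q

namespace WordPath

variable {p q r : BlockState T m} {u v z : List T}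

theorem trans (hu : WordPath w p u r) (hv : WordPath w r v q) : WordPath w p (u ++ v) q := by
  induction hu with
  | nil => exact hv
  | letter _ ih => exact .letter (ih hv)
  | next hij _ ih => exact .next hij (ih hv)

theorem exists_of_append (h : WordPath w p (u ++ v) q) :
    ∃ r, WordPath w p u r ∧ WordPath w r v q := by
  generalize hz : u ++ v = z at h
  induction h generalizing u with
  | nil p =>
    obtain ⟨rfl, rfl⟩ := List.append_eq_nil_iff.1 hz
    exact ⟨p, .nil p, .nil p⟩
  | @letter i a x z q h ih =>
    rcases List.append_eq_cons_iff.1 hz with ⟨rfl, rfl⟩ | ⟨u, rfl, rfl⟩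
    · exact ⟨_, .nil _, .letter h⟩
    · obtain ⟨r, hu, hv⟩ := ih rfl
      exact ⟨r, .letter hu, hv⟩
  | next hij _ ih =>
    obtain ⟨r, hu, hv⟩ := ih hz
    exact ⟨r, .next hij hu, hv⟩

theorem fst_le (h : WordPath w p z q) : p.1 ≤ q.1 := by
  induction h with
  | nil => exact le_rfl
  | letter _ ih => exact ih
  | next hij _ ih => exact hij.le.trans ih

theorem eq_of_length_eq {z' : List T} {q' : BlockState T m} (h : WordPath w p z q)
    (h' : WordPath w p z' q') (hq : p.1 = q.1) (hq' : p.1 = q'.1) (hlen : z.length = z'.length) :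
    z = z' := by
  induction h generalizing z' with
  | nil => exact (List.length_eq_zero_iff.1 hlen.symm).symm
  | @letter i a x z _ _ ih =>
    generalize hp : (i, a :: x) = p at h' hq'
    cases h' with
    | nil => simp at hlen
    | letter h' =>
      obtain ⟨rfl, rfl, rfl⟩ := by simpa only [Prod.mk.injEq, List.cons.injEq] using hp
      rw [ih h' hq hq' (by simpa using hlen)]
    | next hij h' => exact absurd (hij.trans_le h'.fst_le) hq'.not_lt
  | next hij h => exact absurd (hij.trans_le h.fst_le) hq.not_lt

theorem rotate (i : Fin m) (x y : List T) : WordPath w (i, x ++ y) x (i, y ++ x) := by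
  induction x generalizing y with
  | nil => simpa using WordPath.nil (i, y)
  | cons a x ih => exact .letter (by simpa using ih (y ++ [a]))

theorem snd (p : BlockState T m) : WordPath w p p.2 p := by
  simpa using rotate p.1 p.2 []

theorem flatten {l : List (List T)} (h : ∀ u ∈ l, WordPath w p u p) :
    WordPath w p l.flatten p := by
  induction l with
  | nil => exact .nil p
  | cons u l ih =>
    exact (h u List.mem_cons_self).trans (ih fun v hv => h v (List.mem_cons_of_mem u hv))

end WordPath

/-- The states `(i, x)` in which `x` is a rotation of `wᵢ`. -/
def rotationStates (w : Fin m → List T) : Set (BlockState T m) := {p | p.2 ~r w p.1}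

theorem finite_rotationStates (w : Fin m → List T) : (rotationStates w).Finite := by
  refine (Set.finite_iUnion fun i : Fin m =>
    ((w i).cyclicPermutations.finite_toSet).image (Prod.mk i)).subset fun p hp => ?_
  exact Set.mem_iUnion.2 ⟨p.1, p.2, List.mem_cyclicPermutations_iff.2 hp, rfl⟩

theorem mem_rotationStates_append_singleton {i : Fin m} {a : T} {x : List T}
    (h : (i, a :: x) ∈ rotationStates w) : (i, x ++ [a]) ∈ rotationStates w :=
  .trans (.symm ⟨1, by simp⟩) h

theorem WordPath.mem_rotationStates {p q : BlockState T m} {z : List T} (h : WordPath w p z q)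
    (hp : p ∈ rotationStates w) : q ∈ rotationStates w := by
  induction h with
  | nil => exact hp
  | letter _ ih => exact ih (mem_rotationStates_append_singleton hp)
  | next _ _ ih => exact ih (.refl _)

theorem WordPath.exists_mem_of_mem {p q : BlockState T m} {z : List T} (h : WordPath w p z q)
    (hp : p ∈ rotationStates w) : ∀ a ∈ z, ∃ i, a ∈ w i := by
  induction h with
  | nil => simp
  | @letter i a x z _ _ ih =>
    refine List.forall_mem_cons.2 ⟨⟨i, ?_⟩, ih (mem_rotationStates_append_singleton hp)⟩
    exact (List.IsRotated.mem_iff hp).1 List.mem_cons_self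
  | next _ _ ih => exact ih (.refl _)

theorem wordPath_of_mem_wordBounded {n : ℕ} {w : Fin (n + 1) → List T} {z : List T}
    (hz : z ∈ wordBounded w) : WordPath w (0, w 0) z (Fin.last n, w (Fin.last n)) := by
  obtain ⟨k, rfl⟩ := hz
  have hblock : ∀ i, WordPath w (i, w i) (List.replicate (k i) (w i)).flatten (i, w i) := fun i =>
    .flatten fun u hu => by rw [List.eq_of_mem_replicate hu]; exact .snd (i, w i)
  have hprefix : ∀ i : Fin (n + 1), WordPath w (0, w 0) (List.ofFn fun j : Fin (i + 1) =>
      (List.replicate (k (j.castLE i.2)) (w (j.castLE i.2))).flatten).flatten (i, w i) := by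
    intro i
    induction i using Fin.induction with
    | zero =>
      rw [List.ofFn_succ, List.flatten_cons]
      exact (hblock 0).trans (.nil (0, w 0))
    | succ i ih =>
      rw [List.ofFn_succ_last, List.flatten_append]
      refine ih.trans (.next i.castSucc_lt_succ ?_)
      rw [List.flatten_singleton]
      exact hblock i.succ
  exact hprefix (Fin.last n)

/-- The power of `p.2` that has length `P` whenever `|p.2|` divides `P`; it labels a loop at `p`. -/
def loopWord (P : ℕ) (p : BlockState T m) : List T :=
  (List.replicate (P / p.2.length) p.2).flatten

theorem wordPath_loopWord (P : ℕ) (p : BlockState T m) : WordPath w p (loopWord P p) p :=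
  .flatten fun _ hu => List.eq_of_mem_replicate hu ▸ .snd p

theorem length_loopWord {P : ℕ} (hP : ∏ i, (w i).length ∣ P) {p : BlockState T m}
    (hp : p ∈ rotationStates w) : (loopWord P p).length = P := by
  have hlen : p.2.length = (w p.1).length := (List.IsRotated.perm hp).length_eq
  rw [loopWord, List.length_flatten, List.map_replicate, List.sum_replicate, smul_eq_mul, hlen]
  exact Nat.div_mul_cancel ((Finset.dvd_prod_of_mem _ (Finset.mem_univ p.1)).trans hP)

theorem semiconjBy_kstar {K : Type*} [KleeneAlgebra K] {a x y : K} (h : SemiconjBy a x y) :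
    SemiconjBy a x∗ y∗ := by
  apply le_antisymm
  · refine mul_kstar_le (le_mul_of_one_le_left' one_le_kstar) ?_
    rw [mul_assoc, h.eq, ← mul_assoc]
    exact mul_le_mul_left kstar_mul_le_kstar a
  · refine kstar_mul_le (le_mul_of_one_le_right' one_le_kstar) ?_
    rw [← mul_assoc, ← h.eq, mul_assoc]
    exact mul_le_mul_right mul_kstar_le_kstar a

theorem singleton_mul_singleton (u v : List T) : ({u} * {v} : Language T) = {u ++ v} :=
  Set.image2_singleton

theorem singleton_le_iff {L : Language T} {z : List T} : {z} ≤ L ↔ z ∈ L :=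
  Set.singleton_subset_iff

theorem WordPath.singleton_mul_loopWord_kstar {P : ℕ} (hP : ∏ i, (w i).length ∣ P)
    {p q : BlockState T m} (hp : p ∈ rotationStates w) (hpq : p.1 = q.1) {z : List T}
    (h : WordPath w p z q) :
    ({z} * {loopWord P q}∗ : Language T) = {loopWord P p}∗ * {z} := by
  refine (semiconjBy_kstar ?_).eq
  rw [SemiconjBy, singleton_mul_singleton, singleton_mul_singleton]
  refine congrArg _ (eq_of_length_eq (h.trans (wordPath_loopWord P q))
    ((wordPath_loopWord P p).trans h) hpq hpq ?_)
  rw [List.length_append, List.length_append, length_loopWord hP hp,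
    length_loopWord hP (h.mem_rotationStates hp), add_comm]

end Paths

section SoundGrammar

variable {T N : Type}

/-- The language of a symbol when the nonterminals stand for the languages `f`. -/
def symbolLanguage (f : N → Language T) : Symbol T N → Language T
  | .terminal a => {[a]}
  | .nonterminal X => f X

/-- The language of a sentential form when the nonterminals stand for the languages `f`. -/
def formLanguage (f : N → Language T) (α : List (Symbol T N)) : Language T :=
  (α.map (symbolLanguage f)).prod

theorem formLanguage_cons (f : N → Language T) (s : Symbol T N) (α : List (Symbol T N)) :
    formLanguage f (s :: α) = symbolLanguage f s * formLanguage f α :=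
  List.prod_cons

theorem formLanguage_append (f : N → Language T) (α β : List (Symbol T N)) :
    formLanguage f (α ++ β) = formLanguage f α * formLanguage f β := by
  simp [formLanguage]

theorem formLanguage_nonterminal (f : N → Language T) (X : N) :
    formLanguage f [.nonterminal X] = f X :=
  mul_one (f X)

theorem formLanguage_map_terminal (f : N → Language T) (z : List T) :
    formLanguage f (z.map .terminal) = {z} := by
  induction z with
  | nil => rfl
  | cons a z ih =>
    rw [List.map_cons, formLanguage_cons, ih]
    exact singleton_mul_singleton [a] z

/-- The language generated from a nonterminal that need not be the initial one. -/
def generated (g : ContextFreeGrammar T) (X : g.NT) : Language T :=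
  {z | g.Derives [.nonterminal X] (z.map .terminal)}

theorem derives_of_mem_formLanguage_generated {g : ContextFreeGrammar T}
    {α : List (Symbol T g.NT)} {z : List T} (hz : z ∈ formLanguage (generated g) α) :
    g.Derives α (z.map .terminal) := by
  induction α generalizing z with
  | nil => obtain rfl : z = [] := hz; exact .refl _
  | cons s α ih =>
    rw [formLanguage_cons] at hz
    obtain ⟨u, hu, v, hv, rfl⟩ := hz
    have hs : g.Derives [s] (u.map .terminal) := by
      cases s with
      | terminal a => obtain rfl : u = [a] := hu; exact .refl _
      | nonterminal X => exact hu
    rw [List.map_append]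
    exact (hs.append_right α).trans ((ih hv).append_left _)

/-- A nonterminal that is named by the language it should generate, and that counts for `rank`
nonterminals in a sentential form. -/
structure RankedLanguage (T : Type) where
  language : Language T
  rank : ℕ
  rank_pos : 0 < rank

/-- The rank of a symbol, with terminals counting for nothing. -/
def symbolRank : Symbol T (RankedLanguage T) → ℕ
  | .terminal _ => 0
  | .nonterminal K => K.rank

/-- The rank of a sentential form, an upper bound for its number of nonterminals. -/
def formRank (α : List (Symbol T (RankedLanguage T))) : ℕ :=
  (α.map symbolRank).sum

theorem formRank_append (α β : List (Symbol T (RankedLanguage T))) :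
    formRank (α ++ β) = formRank α + formRank β := by
  simp [formRank]

theorem formRank_nonterminal (K : RankedLanguage T) : formRank [.nonterminal K] = K.rank :=
  rfl

theorem formRank_map_terminal (z : List T) : formRank (z.map .terminal) = 0 := by
  simp [formRank, symbolRank, Function.comp_def]

theorem countP_isNT_le_formRank (α : List (Symbol T (RankedLanguage T))) :
    α.countP Symbol.isNT ≤ formRank α := by
  induction α with
  | nil => exact Nat.zero_le _
  | cons s α ih =>
    cases s with
    | terminal a => simpa [formRank, symbolRank, Symbol.isNT] using ih
    | nonterminal K =>
      rw [List.countP_cons_of_pos rfl, formRank, List.map_cons, List.sum_cons, add_comm]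
      exact add_le_add K.rank_pos ih

/-- All rules of output length at most `B` over the symbols `V` that are consistent with the
languages and the ranks of the nonterminals. -/
def soundRules (V : Set (Symbol T (RankedLanguage T))) (B : ℕ) :
    Set (ContextFreeRule T (RankedLanguage T)) :=
  {r | .nonterminal r.input ∈ V ∧ r.output.length ≤ B ∧ (∀ s ∈ r.output, s ∈ V) ∧
    formLanguage RankedLanguage.language r.output ≤ r.input.language ∧
    formRank r.output ≤ r.input.rank}

variable {V : Set (Symbol T (RankedLanguage T))} {B : ℕ} {K K₁ K₂ : RankedLanguage T}
  {α β : List (Symbol T (RankedLanguage T))} {z : List T}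

theorem finite_soundRules (hV : V.Finite) (B : ℕ) : (soundRules V B).Finite := by
  have : Finite V := hV
  have houtput : {α : List (Symbol T (RankedLanguage T)) |
      α.length ≤ B ∧ ∀ s ∈ α, s ∈ V}.Finite := by
    refine ((List.finite_length_le V B).image (List.map Subtype.val)).subset ?_
    rintro α ⟨hlen, hα⟩
    lift α to List V using hα
    exact ⟨α, by simpa using hlen, rfl⟩
  have hinput : {K | Symbol.nonterminal K ∈ V}.Finite :=
    hV.preimage fun _ _ _ _ h => Symbol.nonterminal.inj h
  refine ((hinput.prod houtput).image fun x => (⟨x.1, x.2⟩ : ContextFreeRule T _)).subset ?_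
  rintro ⟨K, α⟩ ⟨hK, hlen, hα, _⟩
  exact ⟨(K, α), ⟨hK, hlen, hα⟩, rfl⟩

/-- The grammar of all sound rules. Its derivations respect languages and ranks by definition, so
only the completeness of such a grammar is ever in question. -/
noncomputable def soundGrammar (hV : V.Finite) (B : ℕ) (K : RankedLanguage T) :
    ContextFreeGrammar T where
  NT := RankedLanguage T
  initial := K
  rules := (finite_soundRules hV B).toFinset

theorem soundRules_rewrites_le {r : ContextFreeRule T (RankedLanguage T)} (hr : r ∈ soundRules V B)
    (h : r.Rewrites α β) :
    formLanguage RankedLanguage.language β ≤ formLanguage RankedLanguage.language α ∧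
      formRank β ≤ formRank α := by
  obtain ⟨_, _, _, hlanguage, hrank⟩ := hr
  obtain ⟨p, q, rfl, rfl⟩ := h.exists_parts
  simp only [formLanguage_append, formRank_append, formLanguage_nonterminal, formRank_nonterminal]
  exact ⟨by gcongr, by gcongr⟩

theorem soundGrammar_derives_le {hV : V.Finite} (h : (soundGrammar hV B K).Derives α β) :
    formLanguage RankedLanguage.language β ≤ formLanguage RankedLanguage.language α ∧
      formRank β ≤ formRank α := by
  induction h with
  | refl => exact ⟨le_rfl, le_rfl⟩
  | tail _ hstep ih =>
    obtain ⟨r, hr, hrw⟩ := hstep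
    obtain ⟨hlanguage, hrank⟩ := soundRules_rewrites_le ((Set.Finite.mem_toFinset _).1 hr) hrw
    exact ⟨hlanguage.trans ih.1, hrank.trans ih.2⟩

theorem language_soundGrammar_le (hV : V.Finite) : (soundGrammar hV B K).language ≤ K.language :=
  fun z hz => by
    have h : formLanguage _ (z.map .terminal) ≤ formLanguage _ [.nonterminal K] :=
      (soundGrammar_derives_le hz).1
    rw [formLanguage_map_terminal, formLanguage_nonterminal] at h
    exact h rfl

theorem formLanguage_le_language_soundGrammar (hV : V.Finite) (hr : ⟨K, α⟩ ∈ soundRules V B) :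
    formLanguage (fun K' => (soundGrammar hV B K').language) α ≤ (soundGrammar hV B K).language :=
  fun _ hz =>
    ContextFreeGrammar.Produces.trans_derives
      ⟨⟨K, α⟩, (finite_soundRules hV B).mem_toFinset.2 hr, .input_output⟩
      (derives_of_mem_formLanguage_generated (g := soundGrammar hV B K) hz)

theorem mem_language_soundGrammar (hV : V.Finite) (hK : .nonterminal K ∈ V)
    (hzV : ∀ a ∈ z, .terminal a ∈ V) (hlen : z.length ≤ B) (hz : z ∈ K.language) :
    z ∈ (soundGrammar hV B K).language := by
  have hr : ⟨K, z.map .terminal⟩ ∈ soundRules V B := by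
    refine ⟨hK, by simpa using hlen, by simpa using hzV, ?_, by simp [formRank_map_terminal]⟩
    rw [formLanguage_map_terminal]
    exact singleton_le_iff.2 hz
  refine formLanguage_le_language_soundGrammar hV hr ?_
  rw [formLanguage_map_terminal]
  exact Set.mem_singleton z

theorem singleton_mul_language_soundGrammar_le (hV : V.Finite) (hK : .nonterminal K ∈ V)
    (hK₁ : .nonterminal K₁ ∈ V) (hzV : ∀ a ∈ z, .terminal a ∈ V) (hlen : z.length < B)
    (hlanguage : {z} * K₁.language ≤ K.language) (hrank : K₁.rank ≤ K.rank) :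
    {z} * (soundGrammar hV B K₁).language ≤ (soundGrammar hV B K).language := by
  have hr : ⟨K, z.map .terminal ++ [.nonterminal K₁]⟩ ∈ soundRules V B := by
    refine ⟨hK, by simpa using hlen, ?_, ?_, ?_⟩
    · simpa [or_imp, forall_and, hK₁] using hzV
    · simpa [formLanguage_append, formLanguage_map_terminal, formLanguage_nonterminal]
    · simpa [formRank_append, formRank_map_terminal, formRank_nonterminal]
  simpa [formLanguage_append, formLanguage_map_terminal, formLanguage_nonterminal] using
    formLanguage_le_language_soundGrammar hV hr

theorem language_soundGrammar_mul_singleton_le (hV : V.Finite) (hK : .nonterminal K ∈ V)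
    (hK₁ : .nonterminal K₁ ∈ V) (hzV : ∀ a ∈ z, .terminal a ∈ V) (hlen : z.length < B)
    (hlanguage : K₁.language * {z} ≤ K.language) (hrank : K₁.rank ≤ K.rank) :
    (soundGrammar hV B K₁).language * {z} ≤ (soundGrammar hV B K).language := by
  have hr : ⟨K, [.nonterminal K₁] ++ z.map .terminal⟩ ∈ soundRules V B := by
    refine ⟨hK, by simpa using hlen, ?_, ?_, ?_⟩
    · simpa [or_imp, forall_and, hK₁] using hzV
    · simpa only [formLanguage_append, formLanguage_map_terminal, formLanguage_nonterminal]
    · simpa only [formRank_append, formRank_map_terminal, formRank_nonterminal]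
  simpa only [formLanguage_append, formLanguage_map_terminal, formLanguage_nonterminal] using
    formLanguage_le_language_soundGrammar hV hr

theorem language_soundGrammar_mul_le (hV : V.Finite) (hB : 2 ≤ B) (hK : .nonterminal K ∈ V)
    (hK₁ : .nonterminal K₁ ∈ V) (hK₂ : .nonterminal K₂ ∈ V)
    (hlanguage : K₁.language * K₂.language ≤ K.language) (hrank : K₁.rank + K₂.rank ≤ K.rank) :
    (soundGrammar hV B K₁).language * (soundGrammar hV B K₂).language ≤
      (soundGrammar hV B K).language := by
  have hr : ⟨K, [.nonterminal K₁] ++ [.nonterminal K₂]⟩ ∈ soundRules V B := by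
    refine ⟨hK, by simpa using hB, by simp [hK₁, hK₂], ?_, ?_⟩
    · simpa only [formLanguage_append, formLanguage_nonterminal]
    · simpa only [formRank_append, formRank_nonterminal]
  simpa only [formLanguage_append, formLanguage_nonterminal] using
    formLanguage_le_language_soundGrammar hV hr

/-- Generated by a grammar all of whose sentential forms contain at most `k` nonterminals. -/
def IsUltralinearOfRank (L : Language T) (k : ℕ) : Prop :=
  ∃ g : ContextFreeGrammar T, g.language = L ∧ ∀ α : List (Symbol T g.NT),
    g.Derives [.nonterminal g.initial] α → α.countP Symbol.isNT ≤ k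

theorem isUltralinearOfRank_of_le_language_soundGrammar (hV : V.Finite)
    (h : K.language ≤ (soundGrammar hV B K).language) : IsUltralinearOfRank K.language K.rank := by
  refine ⟨soundGrammar hV B K, (language_soundGrammar_le hV).antisymm h, fun α hα => ?_⟩
  calc α.countP Symbol.isNT ≤ formRank α := countP_isNT_le_formRank α
    _ ≤ formRank [.nonterminal K] := (soundGrammar_derives_le hα).2
    _ = K.rank := formRank_nonterminal K

end SoundGrammar

section FlatPumping

variable {T : Type} {m : ℕ} {g : ContextFreeGrammar T} {w : Fin m → List T}

/-- A sentential form together with the source and the target of the paths to be labelled by the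
words that it yields. -/
abbrev PathNode (g : ContextFreeGrammar T) (m : ℕ) :=
  List (Symbol T g.NT) × BlockState T m × BlockState T m

/-- The words yielded by the sentential form of a node and labelling a path between its states. -/
def pathYield (g : ContextFreeGrammar T) (w : Fin m → List T) (x : PathNode g m) : Language T :=
  {z | Yields g x.1 z ∧ WordPath w x.2.1 z x.2.2}

/-- The nodes that can occur in the binary derivation trees of labels of paths. -/
def pathNodes (g : ContextFreeGrammar T) (w : Fin m → List T) : Set (PathNode g m) :=
  items g ×ˢ rotationStates w ×ˢ rotationStates w

theorem finite_pathNodes (g : ContextFreeGrammar T) (w : Fin m → List T) :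
    (pathNodes g w).Finite :=
  (finite_items g).prod ((finite_rotationStates w).prod (finite_rotationStates w))

theorem pathYield_mul_le {s : Symbol T g.NT} {γ β : List (Symbol T g.NT)} (hs : Expands g s γ)
    (p r q : BlockState T m) :
    pathYield g w (γ, p, r) * pathYield g w (β, r, q) ≤ pathYield g w (s :: β, p, q) := by
  rintro _ ⟨u, ⟨hγ, hu⟩, v, ⟨hβ, hv⟩, rfl⟩
  exact ⟨.cons hs hγ hβ, hu.trans hv⟩

/-- The unary grammar of the lengths of the words in the languages `pathYield g w`. -/
def lengthGrammar (g : ContextFreeGrammar T) (w : Fin m → List T) :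
    UnaryGrammar (PathNode g m) where
  leaf x n := ∃ z p q, z.length ≤ 1 ∧ WordPath w p z q ∧ x = (z.map .terminal, p, q) ∧ n = z.length
  branch x y z := ∃ s γ β p r q, Expands g s γ ∧ x = (s :: β, p, q) ∧ y = (γ, p, r) ∧ z = (β, r, q)

theorem exists_mem_pathYield_of_derives {U : Finset (PathNode g m)} {x : PathNode g m} {n : ℕ}
    (h : (lengthGrammar g w).Derives U x n) : ∃ z ∈ pathYield g w x, z.length = n := by
  induction h with
  | leaf _ h =>
    obtain ⟨z, p, q, hlen, hz, rfl, rfl⟩ := h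
    exact ⟨z, ⟨.word hlen, hz⟩, rfl⟩
  | branch _ h _ _ ihy ihz =>
    obtain ⟨s, γ, β, p, r, q, hs, rfl, rfl, rfl⟩ := h
    obtain ⟨u, hu, rfl⟩ := ihy
    obtain ⟨v, hv, rfl⟩ := ihz
    exact ⟨u ++ v, pathYield_mul_le hs p r q ⟨u, hu, v, hv, rfl⟩, List.length_append⟩

theorem derives_length_of_yields {U : Finset (PathNode g m)} (hU : pathNodes g w ⊆ U)
    {X : List (Symbol T g.NT)} {z : List T} {p q : BlockState T m} (hX : X ∈ items g)
    (hp : p ∈ rotationStates w) (h : Yields g X z) (hz : WordPath w p z q) :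
    (lengthGrammar g w).Derives U (X, p, q) z.length := by
  induction h generalizing p q with
  | @word z hlen =>
    exact .leaf (hU ⟨hX, hp, hz.mem_rotationStates hp⟩) ⟨z, p, q, hlen, hz, rfl, rfl⟩
  | @cons s γ β u v hs _ _ ihγ ihβ =>
    obtain ⟨r, hu, hv⟩ := hz.exists_of_append
    rw [List.length_append]
    exact .branch (hU ⟨hX, hp, hz.mem_rotationStates hp⟩) ⟨s, γ, β, p, r, q, hs, rfl, rfl, rfl⟩
      (ihγ (hs.mem_items hX) hp hu)
      (ihβ (mem_items_of_sublist (List.sublist_cons_self s β) hX) (hu.mem_rotationStates hp) hv)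

/-- In every flat node, that is, one whose paths stay inside a single block, every word longer than
`M` is obtained from a word of length at most `M` by pumping the loop of length `P` at its end. -/
def FlatPeriodic (g : ContextFreeGrammar T) (w : Fin m → List T) (P M : ℕ) : Prop :=
  ∀ x ∈ pathNodes g w, x.2.1.1 = x.2.2.1 → ∀ z ∈ pathYield g w x, z.length ≤ M ∨
    ∃ b ∈ pathYield g w x, b.length ≤ M ∧ z ∈ ({b} * {loopWord P x.2.2}∗ : Language T) ∧
      {b} * {loopWord P x.2.2}∗ ≤ pathYield g w x

theorem mem_kstar_singleton {c z : List T} :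
    z ∈ ({c}∗ : Language T) ↔ ∃ k, z = (List.replicate k c).flatten := by
  rw [Language.mem_kstar]
  refine ⟨?_, fun ⟨k, hk⟩ => ⟨_, hk, fun _ => List.eq_of_mem_replicate⟩⟩
  rintro ⟨l, rfl, hl⟩
  exact ⟨l.length, by rw [← List.eq_replicate_of_mem hl]⟩

-- Inside a block a path is determined by its source and its length, so pumping lengths is enough.
theorem exists_flatPeriodic (g : ContextFreeGrammar T) (hw : ∀ i, w i ≠ []) :
    ∃ P M, ∏ i, (w i).length ∣ P ∧ FlatPeriodic g w P M := by
  have hpos : 0 < ∏ i, (w i).length := Finset.prod_pos fun i _ => List.length_pos_iff.2 (hw i)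
  have hleaf : ∀ x n, (lengthGrammar g w).leaf x n → n ≤ 1 := by
    rintro _ _ ⟨z, p, q, hlen, -, rfl, rfl⟩
    exact hlen
  obtain ⟨P, M, hP, hperiod⟩ :=
    UnaryGrammar.exists_common_period hleaf (finite_pathNodes g w).toFinset hpos
  refine ⟨P, M, hP, fun ⟨X, p, q⟩ ⟨hX, hp, hq⟩ hpq z ⟨hXz, hz⟩ => ?_⟩
  refine (hperiod (X, p, q) z.length
    (derives_length_of_yields (by simp) hX hp hXz hz)).imp_right ?_
  rintro ⟨b, hb, k, hk, hlengths⟩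
  choose y hy hylen using fun j => exists_mem_pathYield_of_derives (hlengths j)
  have hpump : ∀ j, y 0 ++ (List.replicate j (loopWord P q)).flatten = y j := fun j => by
    have hloop : WordPath w q (List.replicate j (loopWord P q)).flatten q :=
      .flatten fun _ hu => List.eq_of_mem_replicate hu ▸ wordPath_loopWord P q
    refine ((hy 0).2.trans hloop).eq_of_length_eq (hy j).2 hpq hpq ?_
    rw [List.length_append, List.length_flatten, List.map_replicate, List.sum_replicate,
      length_loopWord hP hq, hylen, hylen, zero_mul, add_zero, smul_eq_mul]
  have hzk : z = y k := hz.eq_of_length_eq (hy k).2 hpq hpq (by rw [hk, hylen])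
  refine ⟨y 0, hy 0, by simpa [hylen] using hb, ?_, ?_⟩
  · exact ⟨y 0, rfl, _, mem_kstar_singleton.2 ⟨k, rfl⟩, (hpump k).trans hzk.symm⟩
  · rintro _ ⟨_, rfl, v, hv, rfl⟩
    obtain ⟨j, rfl⟩ := mem_kstar_singleton.1 hv
    have hyj := hy j
    rwa [← hpump j] at hyj

end FlatPumping

section Construction

variable {T : Type} {m : ℕ} {g : ContextFreeGrammar T} {w : Fin m → List T} {P M : ℕ}
  {x : PathNode g m} {X γ β : List (Symbol T g.NT)} {p q r : BlockState T m} {u v : List T}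

/-- The number of blocks that the paths of a node advance, but at least one. -/
def blockRank (x : PathNode g m) : ℕ := max (x.2.2.1 - x.2.1.1 : ℕ) 1

theorem blockRank_pos (x : PathNode g m) : 0 < blockRank x := le_max_right _ 1

/-- The nonterminal for the words of a node. -/
def plain (g : ContextFreeGrammar T) (w : Fin m → List T) (x : PathNode g m) : RankedLanguage T :=
  ⟨pathYield g w x, blockRank x, blockRank_pos x⟩

/-- The nonterminal for the words of a node, pumped at the start. -/
def leftPumped (P : ℕ) (g : ContextFreeGrammar T) (w : Fin m → List T) (x : PathNode g m) :
    RankedLanguage T :=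
  ⟨{loopWord P x.2.1}∗ * pathYield g w x, blockRank x, blockRank_pos x⟩

/-- The nonterminal for the words of a node, pumped at the end. -/
def rightPumped (P : ℕ) (g : ContextFreeGrammar T) (w : Fin m → List T) (x : PathNode g m) :
    RankedLanguage T :=
  ⟨pathYield g w x * {loopWord P x.2.2}∗, blockRank x, blockRank_pos x⟩

/-- The terminals and nonterminals of the ultralinear grammar. -/
def pathSymbols (P : ℕ) (g : ContextFreeGrammar T) (w : Fin m → List T) :
    Set (Symbol T (RankedLanguage T)) :=
  .terminal '' (⋃ i, {a | a ∈ w i}) ∪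
    .nonterminal '' (⋃ x ∈ pathNodes g w, {plain g w x, leftPumped P g w x, rightPumped P g w x})

theorem finite_pathSymbols (P : ℕ) (g : ContextFreeGrammar T) (w : Fin m → List T) :
    (pathSymbols P g w).Finite :=
  ((Set.finite_iUnion fun i => (w i).finite_toSet).image _).union
    (((finite_pathNodes g w).biUnion fun _ _ => Set.toFinite _).image _)

theorem plain_mem_pathSymbols (hx : x ∈ pathNodes g w) :
    .nonterminal (plain g w x) ∈ pathSymbols P g w :=
  .inr ⟨_, Set.mem_biUnion hx (.inl rfl), rfl⟩

theorem leftPumped_mem_pathSymbols (hx : x ∈ pathNodes g w) :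
    .nonterminal (leftPumped P g w x) ∈ pathSymbols P g w :=
  .inr ⟨_, Set.mem_biUnion hx (.inr (.inl rfl)), rfl⟩

theorem rightPumped_mem_pathSymbols (hx : x ∈ pathNodes g w) :
    .nonterminal (rightPumped P g w x) ∈ pathSymbols P g w :=
  .inr ⟨_, Set.mem_biUnion hx (.inr (.inr rfl)), rfl⟩

theorem WordPath.terminal_mem_pathSymbols (h : WordPath w p u q) (hp : p ∈ rotationStates w) :
    ∀ a ∈ u, .terminal a ∈ pathSymbols P g w := fun a ha =>
  .inl ⟨a, Set.mem_iUnion.2 (h.exists_mem_of_mem hp a ha), rfl⟩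

/-- The language generated from a nonterminal by the sound rules over `pathSymbols`. The bound on
their output length leaves room for a word of length `M`, or a loop of length `P`, next to a
nonterminal, and for two nonterminals. -/
noncomputable def soundLanguage (P M : ℕ) (g : ContextFreeGrammar T) (w : Fin m → List T)
    (K : RankedLanguage T) : Language T :=
  (soundGrammar (finite_pathSymbols P g w) (M + P + 2) K).language

theorem kstar_mul_soundLanguage_plain_le (hP : ∏ i, (w i).length ∣ P) (hx : x ∈ pathNodes g w) :
    {loopWord P x.2.1}∗ * soundLanguage P M g w (plain g w x) ≤
      soundLanguage P M g w (leftPumped P g w x) := by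
  refine kstar_mul_le ?_ ?_
  · rw [← one_mul (soundLanguage P M g w (plain g w x))]
    refine singleton_mul_language_soundGrammar_le (z := []) _ (leftPumped_mem_pathSymbols hx)
      (plain_mem_pathSymbols hx) (by simp) (by simp) ?_ le_rfl
    exact mul_le_mul_left one_le_kstar _
  · refine singleton_mul_language_soundGrammar_le _ (leftPumped_mem_pathSymbols hx)
      (leftPumped_mem_pathSymbols hx) ((wordPath_loopWord P _).terminal_mem_pathSymbols hx.2.1)
      (by rw [length_loopWord hP hx.2.1]; omega) ?_ le_rfl
    rw [leftPumped, ← mul_assoc]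
    exact mul_le_mul_left mul_kstar_le_kstar _

theorem soundLanguage_plain_mul_kstar_le (hP : ∏ i, (w i).length ∣ P) (hx : x ∈ pathNodes g w) :
    soundLanguage P M g w (plain g w x) * {loopWord P x.2.2}∗ ≤
      soundLanguage P M g w (rightPumped P g w x) := by
  refine mul_kstar_le ?_ ?_
  · rw [← mul_one (soundLanguage P M g w (plain g w x))]
    refine language_soundGrammar_mul_singleton_le (z := []) _ (rightPumped_mem_pathSymbols hx)
      (plain_mem_pathSymbols hx) (by simp) (by simp) ?_ le_rfl
    exact mul_le_mul_right one_le_kstar _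
  · refine language_soundGrammar_mul_singleton_le _ (rightPumped_mem_pathSymbols hx)
      (rightPumped_mem_pathSymbols hx) ((wordPath_loopWord P _).terminal_mem_pathSymbols hx.2.2)
      (by rw [length_loopWord hP hx.2.2]; omega) ?_ le_rfl
    rw [rightPumped, mul_assoc]
    exact mul_le_mul_right kstar_mul_le_kstar _

theorem singleton_mul_soundLanguage_plain_le (hP : ∏ i, (w i).length ∣ P)
    (hper : FlatPeriodic g w P M) (hγ : (γ, p, r) ∈ pathNodes g w) (hβ : (β, r, q) ∈ pathNodes g w)
    (hX : (X, p, q) ∈ pathNodes g w)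
    (hmul : pathYield g w (γ, p, r) * pathYield g w (β, r, q) ≤ pathYield g w (X, p, q))
    (hpr : p.1 = r.1) (hu : u ∈ pathYield g w (γ, p, r)) :
    {u} * soundLanguage P M g w (plain g w (β, r, q)) ≤
      soundLanguage P M g w (plain g w (X, p, q)) := by
  have hrank : blockRank (g := g) (β, r, q) = blockRank (X, p, q) := by simp [blockRank, hpr]
  rcases hper _ hγ hpr u hu with hlen | ⟨b, hb, hlen, hub, hpump⟩
  · refine singleton_mul_language_soundGrammar_le _ (plain_mem_pathSymbols hX)
      (plain_mem_pathSymbols hβ) (hu.2.terminal_mem_pathSymbols hX.2.1) (by omega) ?_ hrank.le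
    exact (mul_le_mul_left (singleton_le_iff.2 hu) _).trans hmul
  have hpump' : {b} * (leftPumped P g w (β, r, q)).language ≤ pathYield g w (X, p, q) := by
    rw [leftPumped, ← mul_assoc]
    exact (mul_le_mul_left hpump _).trans hmul
  calc {u} * soundLanguage P M g w (plain g w (β, r, q))
      ≤ {b} * {loopWord P r}∗ * soundLanguage P M g w (plain g w (β, r, q)) :=
        mul_le_mul_left (singleton_le_iff.2 hub) _
    _ = {b} * ({loopWord P r}∗ * soundLanguage P M g w (plain g w (β, r, q))) := mul_assoc ..
    _ ≤ {b} * soundLanguage P M g w (leftPumped P g w (β, r, q)) :=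
        mul_le_mul_right (kstar_mul_soundLanguage_plain_le hP hβ) _
    _ ≤ soundLanguage P M g w (plain g w (X, p, q)) :=
        singleton_mul_language_soundGrammar_le _ (plain_mem_pathSymbols hX)
          (leftPumped_mem_pathSymbols hβ) (hb.2.terminal_mem_pathSymbols hX.2.1) (by omega)
          hpump' hrank.le

theorem soundLanguage_plain_mul_singleton_le (hP : ∏ i, (w i).length ∣ P)
    (hper : FlatPeriodic g w P M) (hγ : (γ, p, r) ∈ pathNodes g w) (hβ : (β, r, q) ∈ pathNodes g w)
    (hX : (X, p, q) ∈ pathNodes g w)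
    (hmul : pathYield g w (γ, p, r) * pathYield g w (β, r, q) ≤ pathYield g w (X, p, q))
    (hrq : r.1 = q.1) (hv : v ∈ pathYield g w (β, r, q)) :
    soundLanguage P M g w (plain g w (γ, p, r)) * {v} ≤
      soundLanguage P M g w (plain g w (X, p, q)) := by
  have hrank : blockRank (g := g) (γ, p, r) = blockRank (X, p, q) := by simp [blockRank, hrq]
  rcases hper _ hβ hrq v hv with hlen | ⟨b, hb, hlen, hvb, hpump⟩
  · refine language_soundGrammar_mul_singleton_le _ (plain_mem_pathSymbols hX)
      (plain_mem_pathSymbols hγ) (hv.2.terminal_mem_pathSymbols hβ.2.1) (by omega) ?_ hrank.le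
    exact (mul_le_mul_right (singleton_le_iff.2 hv) _).trans hmul
  -- The loop at the end of `b` is moved to its start, where it extends the nonterminal.
  rw [hb.2.singleton_mul_loopWord_kstar hP hβ.2.1 hrq] at hvb hpump
  have hpump' : (rightPumped P g w (γ, p, r)).language * {b} ≤ pathYield g w (X, p, q) := by
    rw [rightPumped, mul_assoc]
    exact (mul_le_mul_right hpump _).trans hmul
  calc soundLanguage P M g w (plain g w (γ, p, r)) * {v}
      ≤ soundLanguage P M g w (plain g w (γ, p, r)) * ({loopWord P r}∗ * {b}) :=
        mul_le_mul_right (singleton_le_iff.2 hvb) _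
    _ = soundLanguage P M g w (plain g w (γ, p, r)) * {loopWord P r}∗ * {b} :=
        (mul_assoc ..).symm
    _ ≤ soundLanguage P M g w (rightPumped P g w (γ, p, r)) * {b} :=
        mul_le_mul_left (soundLanguage_plain_mul_kstar_le hP hγ) _
    _ ≤ soundLanguage P M g w (plain g w (X, p, q)) :=
        language_soundGrammar_mul_singleton_le _ (plain_mem_pathSymbols hX)
          (rightPumped_mem_pathSymbols hγ) (hb.2.terminal_mem_pathSymbols hβ.2.1) (by omega)
          hpump' hrank.le

theorem soundLanguage_plain_mul_le (hγ : (γ, p, r) ∈ pathNodes g w)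
    (hβ : (β, r, q) ∈ pathNodes g w) (hX : (X, p, q) ∈ pathNodes g w)
    (hmul : pathYield g w (γ, p, r) * pathYield g w (β, r, q) ≤ pathYield g w (X, p, q))
    (hpr : p.1 < r.1) (hrq : r.1 < q.1) :
    soundLanguage P M g w (plain g w (γ, p, r)) * soundLanguage P M g w (plain g w (β, r, q)) ≤
      soundLanguage P M g w (plain g w (X, p, q)) := by
  refine language_soundGrammar_mul_le _ (Nat.le_add_left 2 _) (plain_mem_pathSymbols hX)
    (plain_mem_pathSymbols hγ) (plain_mem_pathSymbols hβ) hmul ?_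
  simp only [plain, blockRank]
  omega

theorem pathYield_le_soundLanguage_plain (hP : ∏ i, (w i).length ∣ P)
    (hper : FlatPeriodic g w P M) (hX : X ∈ items g) (hp : p ∈ rotationStates w)
    (hpq : p.1 < q.1) :
    pathYield g w (X, p, q) ≤ soundLanguage P M g w (plain g w (X, p, q)) := by
  intro z hz
  obtain ⟨hXz, hz⟩ : Yields g X z ∧ WordPath w p z q := hz
  induction hXz generalizing p q with
  | word hlen =>
    exact mem_language_soundGrammar _ (plain_mem_pathSymbols ⟨hX, hp, hz.mem_rotationStates hp⟩)
      (hz.terminal_mem_pathSymbols hp) (by omega) ⟨.word hlen, hz⟩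
  | @cons s γ β u v hs hγ hβ ihγ ihβ =>
    obtain ⟨r, hu, hv⟩ := hz.exists_of_append
    have hr := hu.mem_rotationStates hp
    have hq := hv.mem_rotationStates hr
    have hγmem := hs.mem_items hX
    have hβmem := mem_items_of_sublist (List.sublist_cons_self s β) hX
    have hγnode : (γ, p, r) ∈ pathNodes g w := ⟨hγmem, hp, hr⟩
    have hβnode : (β, r, q) ∈ pathNodes g w := ⟨hβmem, hr, hq⟩
    have hXnode : (s :: β, p, q) ∈ pathNodes g w := ⟨hX, hp, hq⟩
    have hmul := pathYield_mul_le (w := w) (β := β) hs p r q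
    rcases hu.fst_le.eq_or_lt with hpr | hpr
    · exact singleton_mul_soundLanguage_plain_le hP hper hγnode hβnode hXnode hmul hpr ⟨hγ, hu⟩
        ⟨u, rfl, v, ihβ hβmem hr (hpr ▸ hpq) hv, rfl⟩
    rcases hv.fst_le.eq_or_lt with hrq | hrq
    · exact soundLanguage_plain_mul_singleton_le hP hper hγnode hβnode hXnode hmul hrq ⟨hβ, hv⟩
        ⟨u, ihγ hγmem hp hpr hu, v, rfl, rfl⟩
    · exact soundLanguage_plain_mul_le hγnode hβnode hXnode hmul hpr hrq
        ⟨u, ihγ hγmem hp hpr hu, v, ihβ hβmem hr hrq hv, rfl⟩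

theorem isUltralinearOfRank_pathYield (hw : ∀ i, w i ≠ []) (hX : X ∈ items g)
    (hp : p ∈ rotationStates w) (hpq : p.1 < q.1) :
    IsUltralinearOfRank (pathYield g w (X, p, q)) (q.1 - p.1) := by
  obtain ⟨P, M, hP, hper⟩ := exists_flatPeriodic g hw
  have hrank : (plain g w (X, p, q)).rank = q.1 - p.1 :=
    max_eq_left (Nat.sub_pos_of_lt hpq)
  rw [← hrank]
  exact isUltralinearOfRank_of_le_language_soundGrammar (K := plain g w (X, p, q))
    (finite_pathSymbols P g w) (pathYield_le_soundLanguage_plain hP hper hX hp hpq)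

end Construction

theorem stmt_12 {T : Type} {m : ℕ} (hm : 2 ≤ m) (w : Fin m → List T)
    (hw : ∀ i : Fin m, w i ≠ [])
    (L : Language T) (hL : L.IsContextFree) (hsub : L ≤ wordBounded w) (hε : [] ∉ L) :
    ∃ g : ContextFreeGrammar T,
      g.language = L ∧
      ∀ α : List (Symbol T g.NT),
        g.Derives [Symbol.nonterminal g.initial] α → α.countP Symbol.isNT ≤ m - 1 := by
  obtain ⟨g, rfl⟩ := hL
  obtain ⟨n, rfl⟩ := Nat.exists_eq_add_of_le' (one_le_two.trans hm)
  have hlanguage : g.language = pathYield g w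
      ([.nonterminal g.initial], (0, w 0), (Fin.last n, w (Fin.last n))) := by
    refine le_antisymm (fun z hz => ?_) fun z hz => mem_language_iff_yields.2 hz.1
    exact ⟨mem_language_iff_yields.1 hz, wordPath_of_mem_wordBounded (hsub hz)⟩
  have hlast : (0 : Fin (n + 1)) < Fin.last n := by
    rw [Fin.lt_def, Fin.val_zero, Fin.val_last]
    omega
  have hultralinear := isUltralinearOfRank_pathYield (g := g) (p := (0, w 0))
    (q := (Fin.last n, w (Fin.last n))) hw (.inl (.refl _)) (.refl (w 0)) hlast
  rw [← hlanguage] at hultralinear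
  exact hultralinear
end
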